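/- (Sufficiency in the main theorem.) Consider the system ẋ = f(x) + g₁(x)u₁ + g₂(x)u₂ on an open set U ⊆ ℝⁿ, n ≥ 2, with f, g₁, g₂ smooth. Let (F_k), (G_k) be the Lie and derived flags of Δ = span_{C^∞(U)}{g₁, g₂}, let Λᵏ = (G_k)^⊥ and Cᵏ_q = C(Λᵏ)_q for 1 ≤ k ≤ n−3. Let p ∈ U and suppose there is an open neighborhood W ⊆ U of p such that: (1) dim F_k(q) = dim G_k(q) = 2 + k for all 0 ≤ k ≤ n−2 and all q ∈ W; and (2) (L_f ω)(q) ∈ Cᵏ_q for all 1 ≤ k ≤ n−3, all q ∈ W and all ω ∈ Λᵏ. Then there exist an open neighborhood V ⊆ U of p, a diffeomorphism φ : V → φ(V) ⊆ ℝⁿ, smooth maps α : V → ℝ² and β : V → ℝ^{2×2} with β(x) invertible for all x ∈ V, and smooth functions φ₁, …, φ_{n−2} with φᵢ depending only on the variables z₁, …, z_{i+1}, zₙ (for 1 ≤ i ≤ n−2), such that for all x ∈ V and all v ∈ ℝ²: Dφ(x)( f(x) + Σ_{i=1}^{2}(αᵢ(x) + Σ_{j=1}^{2} β_{ij}(x)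 vⱼ) gᵢ(x) ) = ( φ₁(z) + z₂v₁, φ₂(z) + z₃v₁, …, φ_{n−2}(z) + z_{n−1}v₁, v₂, v₁ ) with z = φ(x), i.e., the closed-loop system in the coordinates z = φ(x) is the triangular form (3). -/

import Mathlib

noncomputable section

/-- A vector field on (an open subset of) `ℝⁿ`, represented as a total map. -/
abbrev VF (n : ℕ) := (Fin n → ℝ) → (Fin n → ℝ)

/-- Lie bracket `[X,Y](x) = DY(x)(X(x)) − DX(x)(Y(x))`. -/
def lieBracket {n : ℕ} (X Y : VF n) : VF n :=
  fun x => fderiv ℝ Y x (X x) - fderiv ℝ X x (Y x)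

/-- Span over `C^∞(U)` of a set of vector fields (membership only constrains values on `U`). -/
def spanOn {n : ℕ} (U : Set (Fin n → ℝ)) (S : Set (VF n)) : Set (VF n) :=
  { X | ∃ (m : ℕ) (c : Fin m → (Fin n → ℝ) → ℝ) (Y : Fin m → VF n),
      (∀ i, ContDiffOn ℝ (⊤ : ℕ∞) (c i) U) ∧ (∀ i, Y i ∈ S) ∧
      ∀ x ∈ U, X x = ∑ i, c i x • Y i x }

/-- Sum of two distributions (as equality of values on `U`). -/
def addOn {n : ℕ} (U : Set (Fin n → ℝ)) (A B : Set (VF n)) : Set (VF n) :=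
  { X | ∃ Y ∈ A, ∃ Z ∈ B, ∀ x ∈ U, X x = Y x + Z x }

/-- The set of brackets `[X,Y]`, `X ∈ A`, `Y ∈ B`. -/
def bracketSet {n : ℕ} (A B : Set (VF n)) : Set (VF n) :=
  { Z | ∃ X ∈ A, ∃ Y ∈ B, Z = lieBracket X Y }

/-- The Lie flag: `F₀ = Δ`, `F_{k+1} = F_k + span_{C^∞(U)}{[X,Y] : X ∈ F_k, Y ∈ F₀}`. -/
def lieFlag {n : ℕ} (U : Set (Fin n → ℝ)) (Δ : Set (VF n)) : ℕ → Set (VF n)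
  | 0 => Δ
  | k + 1 => addOn U (lieFlag U Δ k) (spanOn U (bracketSet (lieFlag U Δ k) Δ))

/-- The derived flag: `G₀ = Δ`, `G_{k+1} = G_k + span_{C^∞(U)}{[X,Y] : X, Y ∈ G_k}`. -/
def derivedFlag {n : ℕ} (U : Set (Fin n → ℝ)) (Δ : Set (VF n)) : ℕ → Set (VF n)
  | 0 => Δ
  | k + 1 => addOn U (derivedFlag U Δ k)
      (spanOn U (bracketSet (derivedFlag U Δ k) (derivedFlag U Δ k)))

end

noncomputable section

/-- Covectors on `ℝⁿ`. -/
abbrev Covector (n : ℕ) := (Fin n → ℝ) →L[ℝ] ℝ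

/-- A 1-form on (an open subset of) `ℝⁿ`, represented as a total map. -/
abbrev OneForm (n : ℕ) := (Fin n → ℝ) → Covector n

/-- The interior product `ι_v dω(q)`, i.e. the covector
`w ↦ dω(q)(v,w) = (Dω(q)(v))(w) − (Dω(q)(w))(v)`. -/
def intExtDer {n : ℕ} (ω : OneForm n) (q v : Fin n → ℝ) : Covector n :=
  fderiv ℝ ω q v - (fderiv ℝ ω q).flip v

/-- The Lie derivative of a 1-form along a vector field:
`(L_X ω)(q)(v) = (Dω(q)(X(q)))(v) + ω(q)(DX(q)(v))`. -/
def lieDerOneForm {n : ℕ} (X : VF n) (ω : OneForm n) (q : Fin n → ℝ) : Covector n :=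
  fderiv ℝ ω q (X q) + (ω q).comp (fderiv ℝ X q)

/-- The annihilator `A^⊥` of a set `A` of vector fields: the smooth 1-forms `ω` on `U`
with `ω(x)(X(x)) = 0` for all `X ∈ A`, `x ∈ U`. -/
def annihilatorOn {n : ℕ} (U : Set (Fin n → ℝ)) (A : Set (VF n)) : Set (OneForm n) :=
  { ω | ContDiffOn ℝ (⊤ : ℕ∞) ω U ∧ ∀ X ∈ A, ∀ x ∈ U, ω x (X x) = 0 }

/-- The associated (Cauchy characteristic) space of a codistribution `Λ` at `q`. -/
def assocOf {n : ℕ} (Λ : Set (OneForm n)) (q : Fin n → ℝ) : Set (Fin n → ℝ) :=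
  { v | ∀ ω ∈ Λ, ω q v = 0 ∧
      intExtDer ω q v ∈ Submodule.span ℝ { ξ : Covector n | ∃ ρ ∈ Λ, ξ = ρ q } }

/-- The retracting space `C(Λ)_q`, the annihilator of the associated space. -/
def retractOf {n : ℕ} (Λ : Set (OneForm n)) (q : Fin n → ℝ) : Set (Covector n) :=
  { ξ | ∀ v ∈ assocOf Λ q, ξ v = 0 }

/-- `dim Δ(q)`: the dimension of `Δ_q = {X(q) : X ∈ Δ} ⊆ ℝⁿ`. -/
def evalDim {n : ℕ} (A : Set (VF n)) (q : Fin n → ℝ) : ℕ :=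
  Module.finrank ℝ ↥(Submodule.span ℝ { w : Fin n → ℝ | ∃ X ∈ A, w = X q })

/-- The right-hand side of the triangular form (3), with 0-based components:
component `j ≤ n−3` is `φ_{j+1}(z) + z_{j+2} v₁` (1-based), component `n−2` is `v₂` and
component `n−1` is `v₁`.  Here `Φ i` is the 1-based function `φ_{i+1}`. -/
def triRHS (n : ℕ) (Φ : ℕ → (Fin n → ℝ) → ℝ) (z : Fin n → ℝ) (v : Fin 2 → ℝ) :
    Fin n → ℝ :=
  fun j => if h : j.1 + 3 ≤ n then Φ j.1 z + z ⟨j.1 + 1, by omega⟩ * v 0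
           else if j.1 + 2 = n then v 1 else v 0

/-- The system `ẋ = f + g₁u₁ + g₂u₂` is transformable into the triangular form (3)
near `p`: on an open neighborhood `V ⊆ U` of `p` there are a diffeomorphism `φ` onto
`φ(V)` and a regular static state feedback `u = α + βv` such that the closed-loop
vector field is pushed forward by `φ` to the triangular form, where each `φᵢ = Φ (i-1)`
depends only on `z₁, …, z_{i+1}, zₙ`. -/
def IsTriangularizableAt (n : ℕ) (U : Set (Fin n → ℝ)) (f g1 g2 : VF n)
    (p : Fin n → ℝ) : Prop :=
  ∃ V : Set (Fin n → ℝ), IsOpen V ∧ p ∈ V ∧ V ⊆ U ∧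
    ∃ φ ψ : (Fin n → ℝ) → (Fin n → ℝ),
      ContDiffOn ℝ (⊤ : ℕ∞) φ V ∧ IsOpen (φ '' V) ∧ ContDiffOn ℝ (⊤ : ℕ∞) ψ (φ '' V) ∧
      (∀ x ∈ V, ψ (φ x) = x) ∧
      ∃ (α : (Fin n → ℝ) → Fin 2 → ℝ) (β : (Fin n → ℝ) → Fin 2 → Fin 2 → ℝ),
        (∀ i, ContDiffOn ℝ (⊤ : ℕ∞) (fun x => α x i) V) ∧
        (∀ i j, ContDiffOn ℝ (⊤ : ℕ∞) (fun x => β x i j) V) ∧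
        (∀ x ∈ V, β x 0 0 * β x 1 1 - β x 0 1 * β x 1 0 ≠ 0) ∧
        ∃ Φ : ℕ → (Fin n → ℝ) → ℝ,
          (∀ i, i + 3 ≤ n → ContDiffOn ℝ (⊤ : ℕ∞) (Φ i) (φ '' V)) ∧
          (∀ i, i + 3 ≤ n → ∀ z z' : Fin n → ℝ,
            (∀ j : Fin n, (j.1 ≤ i + 1 ∨ j.1 + 1 = n) → z j = z' j) → Φ i z = Φ i z') ∧
          ∀ x ∈ V, ∀ v : Fin 2 → ℝ,
            fderiv ℝ φ x (f x
                + (α x 0 + β x 0 0 * v 0 + β x 0 1 * v 1) • g1 x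
                + (α x 1 + β x 1 0 * v 0 + β x 1 1 * v 1) • g2 x) =
              triRHS n Φ (φ x) v

/-- Conditions 1) and 2) of the main theorem on the set `W`:
1) `dim F_k(q) = dim G_k(q) = 2 + k` for `0 ≤ k ≤ n−2`, `q ∈ W`;
2) `(L_f ω)(q) ∈ Cᵏ_q` for `1 ≤ k ≤ n−3`, `q ∈ W`, `ω ∈ Λᵏ = (G_k)^⊥`. -/
def MainConditionsOn (n : ℕ) (U W : Set (Fin n → ℝ)) (f g1 g2 : VF n) : Prop :=
  (∀ k : ℕ, k + 2 ≤ n → ∀ q ∈ W,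
      evalDim (lieFlag U (spanOn U {g1, g2}) k) q = 2 + k ∧
      evalDim (derivedFlag U (spanOn U {g1, g2}) k) q = 2 + k) ∧
  (∀ k : ℕ, 1 ≤ k → k + 3 ≤ n → ∀ q ∈ W,
      ∀ ω ∈ annihilatorOn U (derivedFlag U (spanOn U {g1, g2}) k),
        lieDerOneForm f ω q ∈
          retractOf (annihilatorOn U (derivedFlag U (spanOn U {g1, g2}) k)) q)

end

section
open scoped ContDiff Topology unitInterval

/-- Pointwise application of a continuous family of linear maps. -/
noncomputable def nemApply (X Y : Type) [NormedAddCommGroup X] [NormedSpace ℝ X]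
    [NormedAddCommGroup Y] [NormedSpace ℝ Y] :
    C(I, X →L[ℝ] Y) →L[ℝ] (C(I, X) →L[ℝ] C(I, Y)) :=
  LinearMap.mkContinuous₂
    (LinearMap.mk₂ ℝ (fun (A : C(I, X →L[ℝ] Y)) (η : C(I, X)) =>
        (⟨fun t => A t (η t), A.continuous.clm_apply η.continuous⟩ : C(I, Y)))
      (by intros; ext; simp) (by intros; ext; simp) (by intros; ext; simp)
      (by intros; ext; simp)) 1
    (by
      intro A η
      rw [ContinuousMap.norm_le _ (by positivity)]
      intro t
      have h1 := A.norm_coe_le_norm t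
      have h2 := η.norm_coe_le_norm t
      have h3 := (A t).le_opNorm (η t)
      simp only [LinearMap.mk₂_apply, ContinuousMap.coe_mk, one_mul]
      calc _ ≤ _ := h3
        _ ≤ _ := by gcongr)

lemma nem_remainder {X Y : Type} [NormedAddCommGroup X] [NormedSpace ℝ X] [FiniteDimensional ℝ X]
    [NormedAddCommGroup Y] [NormedSpace ℝ Y] {v : X → Y} (hv : ContDiff ℝ ∞ v) (R : ℝ) :
    ∃ M : ℝ, ∀ x ∈ Metric.closedBall (0 : X) R, ∀ y ∈ Metric.closedBall (0 : X) R,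
      ‖v y - v x - fderiv ℝ v x (y - x)‖ ≤ M * ‖y - x‖ ^ 2 := by
  have : ProperSpace X := FiniteDimensional.proper ℝ X
  have h1 : ContDiff ℝ ∞ (fderiv ℝ v) := hv.fderiv_right (by simp)
  have h2 : ContDiff ℝ ∞ (fderiv ℝ (fderiv ℝ v)) := h1.fderiv_right (by simp)
  obtain ⟨M, hM⟩ := (isCompact_closedBall (0 : X) R).exists_bound_of_continuousOn
    (f := fderiv ℝ (fderiv ℝ v)) h2.continuous.continuousOn
  refine ⟨M, fun x hx y hy => ?_⟩
  have hM0 : 0 ≤ M := (norm_nonneg _).trans (hM x hx)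
  have hseg : segment ℝ x y ⊆ Metric.closedBall (0 : X) R :=
    (convex_closedBall (0 : X) R).segment_subset hx hy
  have key : ∀ z ∈ segment ℝ x y, ‖fderiv ℝ v z - fderiv ℝ v x‖ ≤ M * ‖y - x‖ := by
    intro z hz
    have := (convex_closedBall (0 : X) R).norm_image_sub_le_of_norm_fderiv_le
      (f := fderiv ℝ v) (𝕜 := ℝ) (fun w _ => (h1.differentiable (by simp)) w) hM hx (hseg hz)
    refine this.trans ?_
    gcongr
    rw [segment_eq_image'] at hz
    obtain ⟨t, ht, rfl⟩ := hz
    simp only [add_sub_cancel_left, norm_smul, Real.norm_eq_abs]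
    rw [abs_of_nonneg ht.1]
    exact mul_le_of_le_one_left (norm_nonneg _) ht.2
  have := (convex_segment x y).norm_image_sub_le_of_norm_fderiv_le' (𝕜 := ℝ)
    (fun w _ => (hv.differentiable (by simp)) w) key (left_mem_segment ℝ x y)
    (right_mem_segment ℝ x y)
  calc _ ≤ _ := this
    _ = _ := by ring

lemma nem_hasFDerivAt {X Y : Type} [NormedAddCommGroup X] [NormedSpace ℝ X]
    [FiniteDimensional ℝ X]
    [NormedAddCommGroup Y] [NormedSpace ℝ Y] {v : X → Y} (hv : ContDiff ℝ ∞ v)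
    (hv' : Continuous (fderiv ℝ v)) (γ₀ : C(I, X)) :
    HasFDerivAt (fun γ : C(I, X) => (⟨v, hv.continuous⟩ : C(X, Y)).comp γ)
      (nemApply X Y ((⟨fderiv ℝ v, hv'⟩ : C(X, X →L[ℝ] Y)).comp γ₀)) γ₀ := by
  obtain ⟨M, hM⟩ := nem_remainder hv (‖γ₀‖ + 1)
  set L := nemApply X Y ((⟨fderiv ℝ v, hv'⟩ : C(X, X →L[ℝ] Y)).comp γ₀) with hL
  set N : C(I, X) → C(I, Y) := fun γ => (⟨v, hv.continuous⟩ : C(X, Y)).comp γ with hN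
  have hO : (fun γ => N γ - N γ₀ - L (γ - γ₀)) =O[𝓝 γ₀] fun γ => ‖γ - γ₀‖ ^ 2 := by
    refine Asymptotics.IsBigO.of_bound |M| ?_
    filter_upwards [Metric.ball_mem_nhds γ₀ one_pos] with γ hγ
    rw [ContinuousMap.norm_le _ (by positivity)]
    intro t
    have hγ' : ‖γ - γ₀‖ < 1 := by rwa [mem_ball_iff_norm] at hγ
    have b0 : ‖γ₀ t‖ ≤ ‖γ₀‖ := γ₀.norm_coe_le_norm t
    have b1 : ‖γ t - γ₀ t‖ ≤ ‖γ - γ₀‖ := (γ - γ₀).norm_coe_le_norm t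
    have b2 : ‖γ t‖ ≤ ‖γ₀‖ + 1 := by
      have := norm_le_norm_add_norm_sub' (γ t) (γ₀ t)
      linarith
    have := hM (γ₀ t) (by simp; linarith) (γ t) (by simpa using b2)
    calc ‖(N γ - N γ₀ - L (γ - γ₀)) t‖ = ‖v (γ t) - v (γ₀ t) - fderiv ℝ v (γ₀ t) (γ t - γ₀ t)‖ := rfl
      _ ≤ M * ‖γ t - γ₀ t‖ ^ 2 := this
      _ ≤ |M| * ‖γ - γ₀‖ ^ 2 := by gcongr; exact le_abs_self M
      _ = _ := by simp
  have h0 := hO.hasFDerivAt (𝕜 := ℝ) (by norm_num : 1 < 2)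
  have h1 : HasFDerivAt (fun γ => N γ₀ + L (γ - γ₀)) L γ₀ :=
    (L.hasFDerivAt.comp γ₀ ((hasFDerivAt_id γ₀).sub_const γ₀)).const_add _
  have h2 := h0.add h1
  rw [zero_add] at h2
  refine h2.congr_of_eventuallyEq (Filter.Eventually.of_forall fun γ => ?_)
  simp

lemma nem_contDiff_nat {X : Type} [NormedAddCommGroup X] [NormedSpace ℝ X]
    [FiniteDimensional ℝ X] (k : ℕ) :
    ∀ {Y : Type} [NormedAddCommGroup Y] [NormedSpace ℝ Y] {v : X → Y} (hv : ContDiff ℝ ∞ v),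
      ContDiff ℝ k (fun γ : C(I, X) => (⟨v, hv.continuous⟩ : C(X, Y)).comp γ) := by
  induction k with
  | zero =>
    intro Y _ _ v hv
    rw [Nat.cast_zero, contDiff_zero]
    exact ContinuousMap.continuous_postcomp _
  | succ k ih =>
    intro Y _ _ v hv
    have h1 : ContDiff ℝ ∞ (fderiv ℝ v) := hv.fderiv_right (by simp)
    rw [Nat.cast_succ, contDiff_succ_iff_hasFDerivAt]
    refine ⟨_, ?_, fun γ => nem_hasFDerivAt hv h1.continuous γ⟩
    have hc : ContDiff ℝ (k : WithTop ℕ∞) (nemApply X Y) :=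
      ContinuousLinearMap.contDiff (𝕜 := ℝ) (E := C(I, X →L[ℝ] Y))
        (F := C(I, X) →L[ℝ] C(I, Y)) (nemApply X Y)
    exact hc.comp (ih h1)

lemma nem_contDiff {X Y : Type} [NormedAddCommGroup X] [NormedSpace ℝ X]
    [FiniteDimensional ℝ X] [NormedAddCommGroup Y] [NormedSpace ℝ Y] {v : X → Y}
    (hv : ContDiff ℝ ∞ v) :
    ContDiff ℝ ∞ (fun γ : C(I, X) => (⟨v, hv.continuous⟩ : C(X, Y)).comp γ) :=
  contDiff_infty.2 fun k => nem_contDiff_nat k hv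

/-- The Volterra integral of a continuous path. -/
noncomputable def volterra (Y : Type) [NormedAddCommGroup Y] [NormedSpace ℝ Y] :
    C(I, Y) →L[ℝ] C(I, Y) :=
  LinearMap.mkContinuous
    { toFun := fun η => ⟨fun t => ∫ u in (0:ℝ)..t, Set.IccExtend zero_le_one η u, by
        have hc : Continuous (Set.IccExtend zero_le_one η) := η.continuous.Icc_extend'
        exact (intervalIntegral.continuous_primitive
          (fun a b => hc.intervalIntegrable a b) 0).comp continuous_subtype_val⟩
      map_add' := by
        intro η ξ
        ext t
        have hc : Continuous (Set.IccExtend zero_le_one η) := η.continuous.Icc_extend'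
        have hd : Continuous (Set.IccExtend zero_le_one ξ) := ξ.continuous.Icc_extend'
        simp only [ContinuousMap.coe_mk, ContinuousMap.add_apply]
        rw [← intervalIntegral.integral_add (hc.intervalIntegrable _ _)
          (hd.intervalIntegrable _ _)]
        rfl
      map_smul' := by
        intro c η
        ext t
        simp only [ContinuousMap.coe_mk, ContinuousMap.smul_apply, RingHom.id_apply]
        rw [← intervalIntegral.integral_smul]
        rfl } 1
    (by
      intro η
      rw [ContinuousMap.norm_le _ (by positivity)]
      intro t
      have : ‖∫ u in (0:ℝ)..t, Set.IccExtend zero_le_one η u‖ ≤ ‖η‖ * |(t:ℝ) - 0| :=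
        intervalIntegral.norm_integral_le_of_norm_le_const fun u _ => by
          simp only [Set.IccExtend, Function.comp]
          exact η.norm_coe_le_norm _
      refine this.trans ?_
      rw [sub_zero, abs_of_nonneg t.2.1, one_mul]
      exact mul_le_of_le_one_right (norm_nonneg _) t.2.2)

lemma volterra_apply {Y : Type} [NormedAddCommGroup Y] [NormedSpace ℝ Y] (η : C(I, Y)) (t : I) :
    volterra Y η t = ∫ u in (0:ℝ)..t, Set.IccExtend zero_le_one η u := rfl

/-- Inverse function theorem, smooth on open sets. -/
lemma smooth_ift {E F : Type} [NormedAddCommGroup E] [NormedSpace ℝ E] [CompleteSpace E]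
    [NormedAddCommGroup F] [NormedSpace ℝ F] {f : E → F} {N : Set E} (hN : IsOpen N)
    (hf : ContDiffOn ℝ ∞ f N) {x : E} (hx : x ∈ N) (f' : E ≃L[ℝ] F)
    (hf' : HasFDerivAt f (f' : E →L[ℝ] F) x) :
    ∃ e : OpenPartialHomeomorph E F, x ∈ e.source ∧ e.source ⊆ N ∧ (∀ y, e y = f y) ∧
      ContDiffOn ℝ ∞ e.symm e.target := by
  have hfx : ContDiffAt ℝ ∞ f x := hf.contDiffAt (hN.mem_nhds hx)
  set e₀ := hfx.toOpenPartialHomeomorph f hf' (by simp) with he₀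
  have hcoe : ∀ y, e₀ y = f y := fun y => by
    rw [he₀, hfx.toOpenPartialHomeomorph_coe hf' (by simp)]
  have hcont : ContinuousOn (fderiv ℝ f) N := hf.continuousOn_fderiv_of_isOpen hN (by simp)
  have hopen : IsOpen (N ∩ fderiv ℝ f ⁻¹' (Set.range ((↑) : (E ≃L[ℝ] F) → E →L[ℝ] F))) :=
    hcont.isOpen_inter_preimage hN ContinuousLinearEquiv.isOpen
  set e := e₀.restrOpen _ hopen with he
  refine ⟨e, ?_, ?_, ?_, ?_⟩
  · rw [he, OpenPartialHomeomorph.restrOpen_source]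
    exact ⟨hfx.mem_toOpenPartialHomeomorph_source hf' (by simp), hx, f', hf'.fderiv.symm⟩
  · rw [he, OpenPartialHomeomorph.restrOpen_source]
    exact fun y hy => hy.2.1
  · intro y; exact hcoe y
  · intro z hz
    have hy := e.map_target hz
    have hy' : e.symm z ∈ N ∩ fderiv ℝ f ⁻¹' (Set.range ((↑) : (E ≃L[ℝ] F) → E →L[ℝ] F)) := by
      have := hy
      rw [he, OpenPartialHomeomorph.restrOpen_source] at this
      exact this.2
    obtain ⟨hyN, g, hg⟩ := hy'
    have hcd : ContDiffAt ℝ ∞ f (e.symm z) := hf.contDiffAt (hN.mem_nhds hyN)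
    have hfe : (e : E → F) = f := funext hcoe
    refine (e.contDiffAt_symm (f₀' := g) hz ?_ ?_).contDiffWithinAt
    · rw [hfe, hg]; exact (hcd.differentiableAt (by simp)).hasFDerivAt
    · rw [hfe]; exact hcd

end

section
open scoped ContDiff Topology unitInterval

/-- `(s, γ) ↦ (u ↦ (u s, s, γ u))` as a continuous linear map. -/
noncomputable def pathLin (K F : Type) [NormedAddCommGroup K] [NormedSpace ℝ K]
    [NormedAddCommGroup F] [NormedSpace ℝ F] :
    (K × C(I, F)) →L[ℝ] C(I, K × K × F) :=
  LinearMap.mkContinuous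
    { toFun := fun x => ⟨fun u => ((u : ℝ) • x.1, x.1, x.2 u), by fun_prop⟩
      map_add' := by intro x y; ext u <;> simp
      map_smul' := by
        intro c x
        ext u <;> simp
        rw [smul_comm] } 1
    (by
      intro x
      rw [ContinuousMap.norm_le _ (by positivity)]
      intro u
      have h1 : ‖x.1‖ ≤ ‖x‖ := norm_fst_le x
      have h2 : ‖x.2 u‖ ≤ ‖x‖ := (x.2.norm_coe_le_norm u).trans (norm_snd_le x)
      have h3 : ‖(u : ℝ) • x.1‖ ≤ ‖x‖ := by
        rw [norm_smul, Real.norm_eq_abs, abs_of_nonneg u.2.1]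
        exact (mul_le_of_le_one_left (norm_nonneg _) u.2.2).trans h1
      rw [one_mul]
      exact norm_prod_le_iff.2 ⟨h3, norm_prod_le_iff.2 ⟨h1, h2⟩⟩)

lemma pathLin_apply {K F : Type} [NormedAddCommGroup K] [NormedSpace ℝ K]
    [NormedAddCommGroup F] [NormedSpace ℝ F] (x : K × C(I, F)) (u : I) :
    pathLin K F x u = ((u : ℝ) • x.1, x.1, x.2 u) := rfl

/-- constant paths -/
noncomputable def constLin (F : Type) [NormedAddCommGroup F] [NormedSpace ℝ F] :
    F →L[ℝ] C(I, F) :=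
  LinearMap.mkContinuous
    { toFun := fun t => ContinuousMap.const I t
      map_add' := by intro x y; ext u; simp
      map_smul' := by intro c x; ext u; simp } 1
    (by
      intro x
      rw [ContinuousMap.norm_le _ (by positivity)]
      intro u
      simp)

lemma constLin_apply {F : Type} [NormedAddCommGroup F] [NormedSpace ℝ F] (t : F) (u : I) :
    constLin F t u = t := rfl

lemma ode_family {K F : Type} [NormedAddCommGroup K] [NormedSpace ℝ K] [FiniteDimensional ℝ K]
    [NormedAddCommGroup F] [NormedSpace ℝ F] [FiniteDimensional ℝ F]
    (a : K × F → K →L[ℝ] F) (ha : ContDiff ℝ ∞ a) (ha0 : a 0 = 0) :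
    ∃ δ > 0, ∃ β : K × F → F, ContDiffOn ℝ ∞ β (Metric.ball 0 δ) ∧
      ∀ s t, (s, t) ∈ Metric.ball (0 : K × F) δ → ∀ τ ∈ Set.Icc (0:ℝ) 1,
        β (τ • s, t) = t + ∫ u in (0:ℝ)..τ, a (u • s, β (u • s, t)) s := by
  have : CompleteSpace K := FiniteDimensional.complete ℝ K
  have : CompleteSpace F := FiniteDimensional.complete ℝ F
  set b : K × K × F → F := fun x => a (x.1, x.2.2) x.2.1 with hb
  have hbs : ContDiff ℝ ∞ b := by
    have : ContDiff ℝ ∞ (fun x : K × K × F => a (x.1, x.2.2)) := ha.comp (by fun_prop)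
    exact this.clm_apply (by fun_prop)
  have hb0 : fderiv ℝ b 0 = 0 := by
    have h1 : DifferentiableAt ℝ (fun x : K × K × F => a (x.1, x.2.2)) 0 :=
      ((ha.comp (by fun_prop : ContDiff ℝ ∞ (fun x : K × K × F => (x.1, x.2.2)))).differentiable
        (by simp)) 0
    have h2 := h1.hasFDerivAt.clm_apply
      (hasFDerivAt_snd (𝕜 := ℝ) (p := (0 : K × K × F))).fst
    have h3 := h2.fderiv
    rw [hb]
    refine Eq.trans h3 ?_
    ext x <;> simp
    all_goals
      have : a ((0:K), (0:F)) = 0 := ha0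
      simp [this]
  set Θ : K × C(I, F) → K × C(I, F) := fun x =>
    (x.1, x.2 - volterra F ((⟨b, hbs.continuous⟩ : C(K × K × F, F)).comp (pathLin K F x))) with hΘ
  have hnem := nem_contDiff hbs
  have hΘs : ContDiff ℝ ∞ Θ := by
    refine contDiff_fst.prodMk (contDiff_snd.sub ?_)
    exact (volterra F).contDiff.comp (hnem.comp (pathLin K F).contDiff)
  have hΘ0 : Θ 0 = 0 := by
    have : (⟨b, hbs.continuous⟩ : C(K × K × F, F)).comp (pathLin K F 0) = 0 := by
      ext u
      simp [hb]
    refine Prod.ext rfl ?_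
    simp only [hΘ]
    rw [this]; simp
  have hd : HasFDerivAt Θ ((ContinuousLinearEquiv.refl ℝ (K × C(I, F)) :
      (K × C(I, F)) ≃L[ℝ] (K × C(I, F))) : (K × C(I, F)) →L[ℝ] (K × C(I, F))) 0 := by
    have h1 : ContDiff ℝ ∞ (fderiv ℝ b) := hbs.fderiv_right (by simp)
    have h2 := nem_hasFDerivAt hbs h1.continuous (pathLin K F 0)
    have h3 : ((⟨fderiv ℝ b, h1.continuous⟩ : C(K × K × F, (K × K × F) →L[ℝ] F)).comp
        (pathLin K F 0)) = 0 := by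
      ext1 u
      simp [hb0]
    rw [h3, map_zero] at h2
    have h4 := h2.comp (0 : K × C(I, F)) (pathLin K F).hasFDerivAt
    have h5 := (volterra F).hasFDerivAt.comp (0 : K × C(I, F)) h4
    have h6 := (hasFDerivAt_fst (𝕜 := ℝ) (p := (0 : K × C(I, F)))).prodMk
      ((hasFDerivAt_snd (𝕜 := ℝ) (p := (0 : K × C(I, F)))).sub h5)
    refine h6.congr_fderiv ?_
    ext x <;> simp
  obtain ⟨e, he0, -, hee, hes⟩ := smooth_ift isOpen_univ hΘs.contDiffOn (Set.mem_univ _) _ hd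
  obtain ⟨r, hr, hrs⟩ := Metric.isOpen_iff.1 e.open_source 0 he0
  set ι : K × F → K × C(I, F) := fun x => (x.1, constLin F x.2) with hι
  have hιs : ContDiff ℝ ∞ ι := contDiff_fst.prodMk ((constLin F).contDiff.comp contDiff_snd)
  have hop : IsOpen (ι ⁻¹' (e.target ∩ e.symm ⁻¹' Metric.ball 0 r)) :=
    (e.isOpen_inter_preimage_symm Metric.isOpen_ball).preimage hιs.continuous
  have he00 : e 0 = 0 := by rw [hee, hΘ0]
  have hes0 : e.symm 0 = 0 := by
    have := e.left_inv he0
    rwa [he00] at this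
  have hι0 : ι 0 = 0 := by simp [hι]
  have h0mem : (0 : K × F) ∈ ι ⁻¹' (e.target ∩ e.symm ⁻¹' Metric.ball 0 r) := by
    rw [Set.mem_preimage, hι0]
    refine ⟨?_, ?_⟩
    · have := e.map_source he0
      rwa [he00] at this
    · rw [Set.mem_preimage, hes0]; exact Metric.mem_ball_self hr
  obtain ⟨δ, hδ, hδs⟩ := Metric.isOpen_iff.1 hop 0 h0mem
  set β : K × F → F := fun x => (e.symm (ι x)).2 1 with hβ
  refine ⟨δ, hδ, β, ?_, ?_⟩
  · have h1 : ContDiffOn ℝ ∞ (fun x => e.symm (ι x)) (Metric.ball 0 δ) :=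
      hes.comp hιs.contDiffOn (fun x hx => (hδs hx).1)
    exact (ContinuousMap.evalCLM ℝ (1 : I)).contDiff.comp_contDiffOn (contDiff_snd.comp_contDiffOn h1)
  · intro s t hst
    set γ := (e.symm (ι (s, t))).2 with hγ
    have hmem := hδs hst
    have hΘe : Θ (e.symm (ι (s, t))) = ι (s, t) := by
      rw [← hee]; exact e.right_inv hmem.1
    have hfst : (e.symm (ι (s, t))).1 = s := congrArg Prod.fst hΘe
    have hpair : e.symm (ι (s, t)) = (s, γ) := Prod.ext hfst rfl
    have hnorm : ‖(s, γ)‖ < r := by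
      rw [← hpair]; simpa using hmem.2
    have hΘγ : Θ (s, γ) = (s, constLin F t) := by rw [← hpair, hΘe]
    -- integral equation for γ
    set G : ℝ → F := Set.IccExtend zero_le_one γ with hG
    have hGc : Continuous G := γ.continuous.Icc_extend'
    have hGI : ∀ u : I, G u = γ u := fun u => Set.IccExtend_val _ _ _
    have hIntg : ∀ τ ∈ Set.Icc (0:ℝ) 1, G τ = t + ∫ u in (0:ℝ)..τ, a (u • s, G u) s := by
      intro τ hτ
      have h1 := congrArg (fun x => (Prod.snd x) ⟨τ, hτ⟩) hΘγ
      simp only [hΘ, ContinuousMap.sub_apply, volterra_apply, constLin_apply] at h1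
      rw [sub_eq_iff_eq_add] at h1
      rw [show G τ = γ ⟨τ, hτ⟩ from hGI ⟨τ, hτ⟩, h1]
      congr 1
      apply intervalIntegral.integral_congr
      intro u hu
      rw [Set.uIcc_of_le hτ.1] at hu
      have hu' : u ∈ Set.Icc (0:ℝ) 1 := ⟨hu.1, hu.2.trans hτ.2⟩
      simp only []
      rw [Set.IccExtend_of_mem _ _ hu', show G u = γ ⟨u, hu'⟩ from hGI ⟨u, hu'⟩]
      rfl
    have hscale : ∀ τ ∈ Set.Icc (0:ℝ) 1, β (τ • s, t) = G τ := by
      intro τ hτ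
      set γ' : C(I, F) := ⟨fun u => G (τ * u), hGc.comp (by fun_prop)⟩ with hγ'
      have hle : ‖(τ • s, γ')‖ ≤ ‖(s, γ)‖ := by
        refine norm_prod_le_iff.2 ⟨?_, ?_⟩
        · rw [norm_smul, Real.norm_eq_abs, abs_of_nonneg hτ.1]
          exact (mul_le_of_le_one_left (norm_nonneg _) hτ.2).trans (norm_fst_le (s, γ))
        · refine le_trans ?_ (norm_snd_le (s, γ))
          rw [ContinuousMap.norm_le _ (norm_nonneg _)]
          intro u
          exact γ.norm_coe_le_norm _
      have hsrc : (τ • s, γ') ∈ e.source := hrs (by simpa using hle.trans_lt hnorm)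
      have hΘ' : Θ (τ • s, γ') = ι (τ • s, t) := by
        refine Prod.ext rfl ?_
        ext1 w
        simp only [hΘ, ContinuousMap.sub_apply, volterra_apply, hι, constLin_apply]
        rw [sub_eq_iff_eq_add]
        have hm : τ * w ∈ Set.Icc (0:ℝ) 1 :=
          ⟨mul_nonneg hτ.1 w.2.1, mul_le_one₀ hτ.2 w.2.1 w.2.2⟩
        have h2 := hIntg (τ * w) hm
        have h3 : γ' w = G (τ * w) := rfl
        rw [h3, h2]
        congr 1
        have h4 := intervalIntegral.smul_integral_comp_mul_left
          (a := 0) (b := (w:ℝ)) (fun u => a (u • s, G u) s) τ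
        rw [mul_zero] at h4
        rw [← h4, ← intervalIntegral.integral_smul]
        apply intervalIntegral.integral_congr
        intro u hu
        rw [Set.uIcc_of_le w.2.1] at hu
        have hu' : u ∈ Set.Icc (0:ℝ) 1 := ⟨hu.1, hu.2.trans w.2.2⟩
        simp only []
        rw [Set.IccExtend_of_mem _ _ hu']
        change _ = a (u • τ • s, G (τ * u)) (τ • s)
        rw [map_smul, smul_smul, mul_comm u τ]
      have h5 : e.symm (ι (τ • s, t)) = (τ • s, γ') := by
        rw [← hΘ', ← hee]; exact e.left_inv hsrc
      rw [hβ]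
      simp only [h5]
      change G (τ * (1:ℝ)) = _
      rw [mul_one]
    intro τ hτ
    rw [hscale τ hτ, hIntg τ hτ]
    congr 1
    apply intervalIntegral.integral_congr
    intro u hu
    rw [Set.uIcc_of_le hτ.1] at hu
    simp only []
    rw [hscale u ⟨hu.1, hu.2.trans hτ.2⟩]

end

section
open scoped ContDiff Topology

lemma frob_R {K F : Type} [NormedAddCommGroup K] [NormedSpace ℝ K]
    [NormedAddCommGroup F] [NormedSpace ℝ F]
    {a : K × F → K →L[ℝ] F} {N B : Set (K × F)} (hN : IsOpen N) (hB : IsOpen B)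
    (ha : ContDiffOn ℝ ∞ a N) {β : K × F → F} (hβ : ContDiffOn ℝ ∞ β B)
    (hstar : ∀ x ∈ B, ∀ τ ∈ Set.Icc (0:ℝ) 1, (τ • x.1, x.2) ∈ B)
    (hmaps : ∀ x ∈ B, (x.1, β x) ∈ N)
    (heuler : ∀ x ∈ B, fderiv ℝ β x (x.1, 0) = a (x.1, β x) x.1)
    (hIntg : ∀ x ∈ N, ∀ w w', fderiv ℝ a x (w, a x w) w' = fderiv ℝ a x (w', a x w') w) :
    ∀ x ∈ B, ∀ w, fderiv ℝ β x (w, 0) = a (x.1, β x) w := by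
  intro x₀ hx₀ w
  obtain ⟨s, t⟩ := x₀
  set A : K × F → K →L[ℝ] F := fun x => a (x.1, β x) with hA
  have hβ1 : ContDiffOn ℝ ∞ (fderiv ℝ β) B := hβ.fderiv_of_isOpen hB (by simp)
  have hβd : ∀ x ∈ B, HasFDerivAt β (fderiv ℝ β x) x := fun x hx =>
    ((hβ.contDiffAt (hB.mem_nhds hx)).differentiableAt (by simp)).hasFDerivAt
  have hbetaOne : ∀ x ∈ B, HasFDerivAt (fderiv ℝ β) (fderiv ℝ (fderiv ℝ β) x) x := fun x hx =>
    ((hβ1.contDiffAt (hB.mem_nhds hx)).differentiableAt (by simp)).hasFDerivAt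
  have had : ∀ x ∈ N, HasFDerivAt a (fderiv ℝ a x) x := fun x hx =>
    ((ha.contDiffAt (hN.mem_nhds hx)).differentiableAt (by simp)).hasFDerivAt
  have hAd : ∀ x ∈ B, HasFDerivAt A ((fderiv ℝ a (x.1, β x)).comp
      ((ContinuousLinearMap.fst ℝ K F).prod (fderiv ℝ β x))) x := fun x hx =>
    (had _ (hmaps x hx)).comp x (hasFDerivAt_fst.prodMk (hβd x hx))
  -- differentiated Euler relation
  have hE1 : ∀ x ∈ B, ∀ w, fderiv ℝ (fderiv ℝ β) x (w, 0) (x.1, 0) =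
      fderiv ℝ a (x.1, β x) (w, fderiv ℝ β x (w, 0)) x.1 + A x w - fderiv ℝ β x (w, 0) := by
    intro x hx w
    have h1 : HasFDerivAt (fun y : K × F => (y.1, (0:F)))
        ((ContinuousLinearMap.fst ℝ K F).prod 0) x := hasFDerivAt_fst.prodMk (hasFDerivAt_const _ _)
    have h2 := (hbetaOne x hx).clm_apply h1
    have h3 := (hAd x hx).clm_apply (hasFDerivAt_fst (𝕜 := ℝ) (p := x))
    have h4 : (fun y : K × F => fderiv ℝ β y (y.1, 0)) =ᶠ[𝓝 x] fun y => A y y.1 := by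
      filter_upwards [hB.mem_nhds hx] with y hy using heuler y hy
    have h5 := h2.unique (h3.congr_of_eventuallyEq h4)
    have h6 := congrArg (fun L => L (w, 0)) h5
    simp at h6
    rw [eq_sub_iff_add_eq, add_comm, h6, add_comm]
  -- the path
  set c : ℝ → K × F := fun τ => (τ • s, t) with hc
  have hcB : ∀ τ ∈ Set.Icc (0:ℝ) 1, c τ ∈ B := fun τ hτ => hstar (s, t) hx₀ τ hτ
  have hcd : ∀ τ, HasDerivAt c (s, 0) τ := by
    intro τ
    have : HasDerivAt (fun τ : ℝ => τ • s) ((1:ℝ) • s) τ := (hasDerivAt_id τ).smul_const s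
    rw [one_smul] at this
    exact this.prodMk (hasDerivAt_const τ t)
  set R : ℝ → F := fun τ => fderiv ℝ β (c τ) (w, 0) - A (c τ) w with hR
  have hRd : ∀ τ ∈ Set.Icc (0:ℝ) 1, HasDerivAt R (fderiv ℝ (fderiv ℝ β) (c τ) (s, 0) (w, 0) -
      fderiv ℝ a ((c τ).1, β (c τ)) (s, fderiv ℝ β (c τ) (s, 0)) w) τ := by
    intro τ hτ
    have h1 := ((hbetaOne _ (hcB τ hτ)).comp_hasDerivAt τ (hcd τ)).clm_apply
      (hasDerivAt_const τ ((w, 0) : K × F))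
    have h2 := ((hAd _ (hcB τ hτ)).comp_hasDerivAt τ (hcd τ)).clm_apply
      (hasDerivAt_const τ w)
    have h3 := h1.sub h2
    simp at h3
    exact h3
  set ρ : ℝ → F := fun τ => τ • R τ with hρ
  have hρd : ∀ τ ∈ Set.Icc (0:ℝ) 1, HasDerivAt ρ
      (fderiv ℝ a ((c τ).1, β (c τ)) (0, ρ τ) s) τ := by
    intro τ hτ
    have h1 := (hasDerivAt_id τ).smul (hRd τ hτ)
    refine h1.congr_deriv ?_
    have hx := hcB τ hτ
    have hsym : fderiv ℝ (fderiv ℝ β) (c τ) (s, 0) (w, 0) =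
        fderiv ℝ (fderiv ℝ β) (c τ) (w, 0) (s, 0) := by
      have := (hβ.contDiffAt (hB.mem_nhds hx)).isSymmSndFDerivAt
        (by simp; exact WithTop.coe_le_coe.2 (le_top : (2 : ℕ∞) ≤ ⊤))
      exact this _ _
    have e1 := hE1 (c τ) hx w
    have e2 := heuler (c τ) hx
    have e3 := hIntg _ (hmaps _ hx) w (c τ).1
    have hc1 : ((c τ).1, (0:F)) = τ • ((s, 0) : K × F) := by simp [hc]
    have hc2 : (c τ).1 = τ • s := rfl
    have e4 : fderiv ℝ β (c τ) (w, 0) = A (c τ) w + R τ := by simp [hR]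
    have e5 : (w, fderiv ℝ β (c τ) (w, 0)) = ((w, A (c τ) w) : K × F) + (0, R τ) := by
      simp [e4]
    rw [e5, map_add] at e1
    rw [hc1, map_smul] at e1 e2
    simp only [id, one_smul]
    have e6 : τ • fderiv ℝ a ((c τ).1, β (c τ)) (s, fderiv ℝ β (c τ) (s, 0)) w =
        fderiv ℝ a ((c τ).1, β (c τ)) ((c τ).1, A (c τ) (c τ).1) w := by
      rw [← smul_apply, ← map_smul]
      congr 2
      rw [Prod.smul_mk, e2]
    rw [smul_sub, e6, hsym, e1]
    have e7 : fderiv ℝ a ((c τ).1, β (c τ)) (0, ρ τ) s =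
        fderiv ℝ a ((c τ).1, β (c τ)) (0, R τ) (c τ).1 := by
      rw [hc2, map_smul, ← smul_apply, ← map_smul]
      simp [hρ]
    rw [e7, add_apply, e4]
    simp only [hA] at e3 ⊢
    rw [e3]
    abel
  have hcc : Continuous c := continuous_iff_continuousAt.2 fun τ => (hcd τ).continuousAt
  obtain ⟨M, hM⟩ := (isCompact_Icc (a := (0:ℝ)) (b := 1)).exists_bound_of_continuousOn
    (f := fun τ => fderiv ℝ a ((c τ).1, β (c τ))) (by
      have h1 : ContinuousOn (fderiv ℝ a) N := ha.continuousOn_fderiv_of_isOpen hN (by simp)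
      refine h1.comp ?_ (fun τ hτ => hmaps _ (hcB τ hτ))
      exact (hcc.fst.continuousOn).prodMk
        (hβ.continuousOn.comp hcc.continuousOn hcB))
  have hz := eq_zero_of_abs_deriv_le_mul_abs_self_of_eq_zero_right (f := ρ) (K := M * ‖s‖)
    (a := 0) (b := 1) (f' := fun τ => fderiv ℝ a ((c τ).1, β (c τ)) (0, ρ τ) s)
    (fun τ hτ => (hρd τ hτ).continuousAt.continuousWithinAt)
    (fun τ hτ => (hρd τ (Set.Ico_subset_Icc_self hτ)).hasDerivWithinAt) (by simp [hρ])
    (fun τ hτ => by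
      have h1 := hM τ (Set.Ico_subset_Icc_self hτ)
      calc _ ≤ ‖fderiv ℝ a ((c τ).1, β (c τ)) (0, ρ τ)‖ * ‖s‖ := ContinuousLinearMap.le_opNorm _ _
        _ ≤ (‖fderiv ℝ a ((c τ).1, β (c τ))‖ * ‖((0, ρ τ) : K × F)‖) * ‖s‖ := by
            gcongr; exact ContinuousLinearMap.le_opNorm _ _
        _ ≤ (M * ‖ρ τ‖) * ‖s‖ := by
            have : ‖((0, ρ τ) : K × F)‖ = ‖ρ τ‖ := by simp [Prod.norm_def]
            rw [this]; gcongr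
        _ = _ := by ring)
  have h1 := hz 1 (by simp)
  simp only [hρ, one_smul, hR, hc] at h1
  exact sub_eq_zero.1 h1

end

section
open scoped ContDiff Topology

lemma cutoff_smooth {E G : Type} [NormedAddCommGroup E] [NormedSpace ℝ E] [FiniteDimensional ℝ E]
    [NormedAddCommGroup G] [NormedSpace ℝ G] {a : E → G} {N : Set E} (hN : IsOpen N)
    (ha : ContDiffOn ℝ ∞ a N) {p : E} (hp : p ∈ N) :
    ∃ (χ : E → ℝ) (r : ℝ), 0 < r ∧ Metric.ball p r ⊆ N ∧ (∀ x ∈ Metric.ball p r, χ x = 1) ∧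
      (∀ x ∉ N, χ x = 0) ∧
      ContDiff ℝ ∞ χ ∧ ContDiff ℝ ∞ (fun x => χ x • a x) := by
  obtain ⟨r, hr, hrN⟩ := Metric.isOpen_iff.1 hN p hp
  let f : ContDiffBump p := ⟨r / 4, r / 2, by positivity, by linarith⟩
  have hts : tsupport f ⊆ N := by
    rw [f.tsupport_eq]
    exact (Metric.closedBall_subset_ball (by change r / 2 < r; linarith)).trans hrN
  refine ⟨f, r / 4, by positivity, (Metric.ball_subset_ball (by linarith)).trans hrN, ?_, ?_,
    f.contDiff, ?_⟩
  · intro x hx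
    exact f.one_of_mem_closedBall (Metric.ball_subset_closedBall hx)
  · intro x hx
    exact image_eq_zero_of_notMem_tsupport fun h => hx (hts h)
  · rw [contDiff_iff_contDiffAt]
    intro x
    by_cases hx : x ∈ N
    · exact f.contDiffAt.smul (ha.contDiffAt (hN.mem_nhds hx))
    · have h1 : x ∉ tsupport f := fun h => hx (hts h)
      have h2 : (fun x => f x • a x) =ᶠ[𝓝 x] fun _ => 0 := by
        filter_upwards [(isClosed_tsupport f).isOpen_compl.mem_nhds h1] with y hy
        simp [image_eq_zero_of_notMem_tsupport hy]
      exact contDiffAt_const.congr_of_eventuallyEq h2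

lemma frob_core {K F : Type} [NormedAddCommGroup K] [NormedSpace ℝ K] [FiniteDimensional ℝ K]
    [NormedAddCommGroup F] [NormedSpace ℝ F] [FiniteDimensional ℝ F]
    {a : K × F → K →L[ℝ] F} {N : Set (K × F)} (hN : IsOpen N) (h0 : 0 ∈ N)
    (ha : ContDiffOn ℝ ∞ a N) (ha0 : a 0 = 0)
    (hIntg : ∀ x ∈ N, ∀ w w', fderiv ℝ a x (w, a x w) w' = fderiv ℝ a x (w', a x w') w) :
    ∃ N' : Set (K × F), IsOpen N' ∧ 0 ∈ N' ∧ N' ⊆ N ∧ ∃ H : K × F → F, ContDiffOn ℝ ∞ H N' ∧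
      fderiv ℝ H 0 = ContinuousLinearMap.snd ℝ K F ∧
      ∀ x ∈ N', ∀ w, fderiv ℝ H x (w, a x w) = 0 := by
  have : CompleteSpace K := FiniteDimensional.complete ℝ K
  have : CompleteSpace F := FiniteDimensional.complete ℝ F
  obtain ⟨χ, r, hr, hrN, hχ1, hχ0, hχ, hχa⟩ := cutoff_smooth hN ha h0
  obtain ⟨δ, hδ, β, hβ, hβi⟩ := ode_family (fun x => χ x • a x) hχa (by simp [ha0])
  have hβt : ∀ t, ((0:K), t) ∈ Metric.ball (0 : K × F) δ → β (0, t) = t := by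
    intro t ht
    have := hβi 0 t ht 0 (by simp)
    simpa using this
  have hβ0 : β 0 = 0 := hβt 0 (by simpa using hδ)
  have h0δ : (0 : K × F) ∈ Metric.ball (0 : K × F) δ := by simpa using hδ
  have hΨc : ContinuousAt (fun x : K × F => (x.1, β x)) 0 :=
    continuousAt_fst.prodMk (hβ.continuousOn.continuousAt (Metric.isOpen_ball.mem_nhds h0δ))
  have hΨ0 : (fun x : K × F => (x.1, β x)) 0 = 0 := by
    simp only [hβ0]; rfl
  have hmem : Metric.ball (0 : K × F) r ∈ 𝓝 ((fun x : K × F => (x.1, β x)) 0) := by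
    rw [hΨ0]; exact Metric.ball_mem_nhds 0 hr
  obtain ⟨δ₁, hδ₁, hδ₁b⟩ := Metric.mem_nhds_iff.1 (hΨc.preimage_mem_nhds
    (t := Metric.ball 0 r) hmem)
  set B := Metric.ball (0 : K × F) (min δ δ₁) with hB
  have hBδ : B ⊆ Metric.ball 0 δ := Metric.ball_subset_ball (min_le_left _ _)
  have hBm : ∀ x ∈ B, (x.1, β x) ∈ Metric.ball (0 : K × F) r := fun x hx =>
    hδ₁b (Metric.ball_subset_ball (min_le_right _ _) hx)
  have h0B : (0 : K × F) ∈ B := by simp [hB, hδ, hδ₁]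
  have hBo : IsOpen B := Metric.isOpen_ball
  have hstar : ∀ x ∈ B, ∀ τ ∈ Set.Icc (0:ℝ) 1, (τ • x.1, x.2) ∈ B := by
    intro x hx τ hτ
    rw [hB, mem_ball_zero_iff] at hx ⊢
    refine lt_of_le_of_lt ?_ hx
    rw [Prod.norm_def, Prod.norm_def]
    refine max_le_max ?_ le_rfl
    rw [norm_smul, Real.norm_eq_abs, abs_of_nonneg hτ.1]
    exact mul_le_of_le_one_left (norm_nonneg _) hτ.2
  have hβB := hβ.mono hBδ
  have hβd : ∀ x ∈ B, HasFDerivAt β (fderiv ℝ β x) x := fun x hx =>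
    ((hβB.contDiffAt (hBo.mem_nhds hx)).differentiableAt (by simp)).hasFDerivAt
  have heuler : ∀ x ∈ B, fderiv ℝ β x (x.1, 0) = a (x.1, β x) x.1 := by
    rintro ⟨s, t⟩ hx
    set c : ℝ → K × F := fun τ => (τ • s, t) with hc
    have hcB : ∀ τ ∈ Set.Icc (0:ℝ) 1, c τ ∈ B := fun τ hτ => hstar (s, t) hx τ hτ
    have hc1 : c 1 = (s, t) := by simp [hc]
    have hcd : ∀ τ, HasDerivAt c (s, 0) τ := by
      intro τ
      have : HasDerivAt (fun τ : ℝ => τ • s) ((1:ℝ) • s) τ := (hasDerivAt_id τ).smul_const s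
      rw [one_smul] at this
      exact this.prodMk (hasDerivAt_const τ t)
    have hcc : Continuous c := continuous_iff_continuousAt.2 fun τ => (hcd τ).continuousAt
    have hO : IsOpen (c ⁻¹' B) := hBo.preimage hcc
    set g : ℝ → F := fun u => (χ (u • s, β (u • s, t)) • a (u • s, β (u • s, t))) s with hg
    have hgc : ContinuousOn g (c ⁻¹' B) := by
      have h1 : ContinuousOn (fun u => ((u • s, β (u • s, t)) : K × F)) (c ⁻¹' B) :=
        (hcc.fst.continuousOn).prodMk (hβB.continuousOn.comp hcc.continuousOn fun _ h => h)
      exact (hχa.continuous.comp_continuousOn h1).clm_apply continuousOn_const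
    have h1m : (1:ℝ) ∈ c ⁻¹' B := hcB 1 (by simp)
    have hI : HasDerivAt (fun τ => t + ∫ u in (0:ℝ)..τ, g u) (g 1) 1 := by
      refine (intervalIntegral.integral_hasDerivAt_right ?_ ?_ ?_).const_add t
      · refine ContinuousOn.intervalIntegrable (hgc.mono ?_)
        rw [Set.uIcc_of_le zero_le_one]
        exact hcB
      · exact hgc.stronglyMeasurableAtFilter hO 1 h1m
      · exact hgc.continuousAt (hO.mem_nhds h1m)
    have hD : HasDerivAt (fun τ => β (c τ)) (fderiv ℝ β (s, t) (s, 0)) 1 := by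
      have := (hβd (c 1) h1m).comp_hasDerivAt 1 (hcd 1)
      rwa [hc1] at this
    have hu := UniqueDiffWithinAt.eq_deriv _ (uniqueDiffOn_Icc (zero_lt_one (α := ℝ)) 1 (by simp))
      hD.hasDerivWithinAt (hI.hasDerivWithinAt.congr
        (fun τ hτ => hβi s t (hBδ hx) τ hτ) (hβi s t (hBδ hx) 1 (by simp)))
    rw [hu]
    simp only [hg, one_smul]
    rw [hχ1 _ (hBm _ hx), one_smul]
  have hR := frob_R Metric.isOpen_ball hBo (ha.mono hrN) hβB hstar hBm heuler
    (fun x hx => hIntg x (hrN hx))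
  -- the straightening map
  set Ψ : K × F → K × F := fun x => (x.1, β x) with hΨ
  have hΨs : ContDiffOn ℝ ∞ Ψ B := contDiff_fst.contDiffOn.prodMk hβB
  have hΨd : ∀ x ∈ B, HasFDerivAt Ψ ((ContinuousLinearMap.fst ℝ K F).prod (fderiv ℝ β x)) x :=
    fun x hx => hasFDerivAt_fst.prodMk (hβd x hx)
  have hbetaZero : fderiv ℝ β 0 = ContinuousLinearMap.snd ℝ K F := by
    ext x
    · have := hR 0 h0B x
      simp only [ContinuousLinearMap.comp_apply, ContinuousLinearMap.inl_apply]
      rw [this]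
      have h1 : ((0 : K × F).1, β 0) = 0 := by rw [hβ0]; rfl
      rw [h1, ha0]; simp
    · simp only [ContinuousLinearMap.comp_apply, ContinuousLinearMap.inr_apply]
      have h1 := (hβd 0 h0B).comp (0:F) (f := fun t : F => ((0:K), t))
        ((ContinuousLinearMap.inr ℝ K F).hasFDerivAt)
      have h2 : (β ∘ fun t : F => ((0:K), t)) =ᶠ[𝓝 0] id := by
        have hc : Continuous fun t : F => ((0:K), t) := by fun_prop
        filter_upwards [hc.continuousAt.preimage_mem_nhds
          (Metric.isOpen_ball.mem_nhds h0δ)] with t ht using hβt t ht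
      have h3 := h1.unique ((hasFDerivAt_id (0:F)).congr_of_eventuallyEq h2)
      have h4 := congrArg (fun L => L x) h3
      simpa using h4
  obtain ⟨e, h0e, heB, hee, hes⟩ := smooth_ift hBo hΨs h0B (ContinuousLinearEquiv.refl ℝ (K × F)) (by
    have := hΨd 0 h0B
    rw [hbetaZero] at this
    exact this)
  have hsrc : ∀ y ∈ e.target, e.symm y ∈ B ∧ Ψ (e.symm y) = y := fun y hy =>
    ⟨heB (e.map_target hy), by rw [← hee]; exact e.right_inv hy⟩
  have h0t : (0 : K × F) ∈ e.target := by
    have := e.map_source h0e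
    rwa [hee, hΨ0] at this
  have hHs : ContDiffOn ℝ ∞ (fun y => (e.symm y).2) e.target := contDiff_snd.comp_contDiffOn hes
  have hchain : ∀ x ∈ e.source, (fderiv ℝ (fun y => (e.symm y).2) (Ψ x)).comp
      ((ContinuousLinearMap.fst ℝ K F).prod (fderiv ℝ β x)) = ContinuousLinearMap.snd ℝ K F := by
    intro x hx
    have hxt : Ψ x ∈ e.target := by rw [← hee]; exact e.map_source hx
    have h1 : HasFDerivAt (fun y => (e.symm y).2) _ (Ψ x) :=
      ((hHs.contDiffAt (e.open_target.mem_nhds hxt)).differentiableAt (by simp)).hasFDerivAt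
    have h2 := h1.comp x (hΨd x (heB hx))
    have h3 : ((fun y => (e.symm y).2) ∘ Ψ) =ᶠ[𝓝 x] Prod.snd := by
      filter_upwards [e.open_source.mem_nhds hx] with y hy
      simp only [Function.comp, ← hee]
      rw [e.left_inv hy]
    exact h2.unique (hasFDerivAt_snd.congr_of_eventuallyEq h3)
  refine ⟨e.target, e.open_target, h0t, ?_, fun y => (e.symm y).2, hHs, ?_, ?_⟩
  · intro y hy
    rw [← (hsrc y hy).2]
    exact hrN (hBm _ (hsrc y hy).1)
  · have := hchain 0 h0e
    rw [hΨ0, hbetaZero] at this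
    exact this
  · intro y hy w
    have h1 := hchain _ (e.map_target hy)
    rw [(hsrc y hy).2] at h1
    have h2 := congrArg (fun L => L (w, 0)) h1
    have h3 := hR _ (hsrc y hy).1 w
    have h4 : ((e.symm y).1, β (e.symm y)) = y := (hsrc y hy).2
    rw [h4] at h3
    simpa [h3] using h2

end

section
open scoped ContDiff Topology

lemma frob_general {E F : Type} [NormedAddCommGroup E] [NormedSpace ℝ E] [FiniteDimensional ℝ E]
    [NormedAddCommGroup F] [NormedSpace ℝ F] [FiniteDimensional ℝ F]
    {N : Set E} (hN : IsOpen N) {θ : E → E →L[ℝ] F} (hθ : ContDiffOn ℝ ∞ θ N) {p : E} (hp : p ∈ N)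
    (hsurj : Function.Surjective (θ p))
    (hinv : ∀ M ⊆ N, IsOpen M → ∀ V W : E → E, ContDiffOn ℝ ∞ V M → ContDiffOn ℝ ∞ W M →
      (∀ x ∈ M, θ x (V x) = 0) → (∀ x ∈ M, θ x (W x) = 0) →
      ∀ x ∈ M, θ x (fderiv ℝ W x (V x) - fderiv ℝ V x (W x)) = 0) :
    ∃ N' ⊆ N, IsOpen N' ∧ p ∈ N' ∧ ∃ H : E → F, ContDiffOn ℝ ∞ H N' ∧ fderiv ℝ H p = θ p ∧
      ∀ x ∈ N', ∀ v, θ x v = 0 → fderiv ℝ H x v = 0 := by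
  have : CompleteSpace E := FiniteDimensional.complete ℝ E
  have : CompleteSpace F := FiniteDimensional.complete ℝ F
  obtain ⟨σ', hσ'⟩ := (θ p).exists_rightInverse_of_surjective (LinearMap.range_eq_top.2 hsurj)
  have hσr : Function.RightInverse σ' (θ p) := fun y => by
    have := congrArg (fun L => L y) hσ'
    simpa using this
  let K := (θ p).ker
  obtain ⟨J, hJ1, hJ2⟩ : ∃ J : E ≃L[ℝ] K × F, (∀ v, (J v).2 = θ p v) ∧
      ∀ k y, J.symm (k, y) = (k : E) + σ' y :=
    ⟨(ContinuousLinearEquiv.equivOfRightInverse (θ p) σ' hσr).trans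
      (ContinuousLinearEquiv.prodComm ℝ F K), fun v => rfl, fun k y => by
        simp [add_comm]⟩
  have hJ3 : ∀ (k : K) (y : F), J ((k : E) + σ' y) = (k, y) := fun k y => by
    rw [← hJ2, J.apply_symm_apply]
  have hJ4 : ∀ v, v = ((J v).1 : E) + σ' (J v).2 := fun v => by
    rw [← hJ2]; simp
  set A : K × F → E := fun x => p + J.symm x with hA
  have hAs : ContDiff ℝ ∞ A := contDiff_const.add J.symm.contDiff
  have hA0 : A 0 = p := by simp [hA]
  set S : K × F → F →L[ℝ] F := fun x => (θ (A x)).comp σ' with hS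
  set D₀ : Set (K × F) := A ⁻¹' N with hD₀
  have hD₀o : IsOpen D₀ := hN.preimage hAs.continuous
  have hθA : ContDiffOn ℝ ∞ (fun x => θ (A x)) D₀ := hθ.comp hAs.contDiffOn fun _ h => h
  have hSs : ContDiffOn ℝ ∞ S D₀ := hθA.clm_comp contDiffOn_const
  set D : Set (K × F) :=
    D₀ ∩ S ⁻¹' (Set.range ((↑) : (F ≃L[ℝ] F) → F →L[ℝ] F)) with hD
  have hDo : IsOpen D := hSs.continuousOn.isOpen_inter_preimage hD₀o ContinuousLinearEquiv.isOpen
  have h0D : (0 : K × F) ∈ D := by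
    refine ⟨by simp [hD₀, hA0, hp], ContinuousLinearEquiv.refl ℝ F, ?_⟩
    ext y
    simp [hS, hA0, hσr y]
  set a : K × F → K →L[ℝ] F := fun x =>
    -((ContinuousLinearMap.inverse (S x)).comp ((θ (A x)).comp K.subtypeL)) with ha
  have has : ContDiffOn ℝ ∞ a D := by
    refine ContDiffOn.neg ?_
    refine ContDiffOn.clm_comp ?_ ((hθA.mono Set.inter_subset_left).clm_comp contDiffOn_const)
    intro x hx
    obtain ⟨e, he⟩ := hx.2
    have h1 : ContDiffAt ℝ ∞ ContinuousLinearMap.inverse (S x) := by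
      rw [← he]; exact contDiffAt_map_inverse e
    exact (h1.comp x (hSs.contDiffAt (hD₀o.mem_nhds hx.1))).contDiffWithinAt
  have ha0 : a 0 = 0 := by
    ext k
    have : θ p (k : E) = 0 := k.2
    simp [ha, hA0, this]
  have hSa : ∀ x ∈ D, ∀ w : K, S x (a x w) = - θ (A x) w := by
    intro x hx w
    obtain ⟨e, he⟩ := hx.2
    simp [ha, ← he]
  have hSi : ∀ x ∈ D, ∀ y, S x y = 0 → y = 0 := by
    intro x hx y hy
    obtain ⟨e, he⟩ := hx.2
    rw [← he] at hy
    simpa using hy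
  have hAJ : ∀ y, A (J (y - p)) = y := fun y => by simp [hA]
  have hJA : ∀ x, J (A x - p) = x := fun x => by simp [hA]
  -- vector fields
  have had : ∀ x ∈ D, HasFDerivAt a (fderiv ℝ a x) x := fun x hx =>
    ((has.contDiffAt (hDo.mem_nhds hx)).differentiableAt (by simp)).hasFDerivAt
  have hJs : ContDiff ℝ ∞ (fun y : E => J (y - p)) := J.contDiff.comp (contDiff_id.sub contDiff_const)
  have hJd : ∀ y, HasFDerivAt (fun y : E => J (y - p)) (J : E →L[ℝ] K × F) y := fun y =>
    J.hasFDerivAt.comp y ((hasFDerivAt_id y).sub_const p)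
  set M : Set E := (fun y : E => J (y - p)) ⁻¹' D with hM
  have hMo : IsOpen M := hDo.preimage hJs.continuous
  have hMN : M ⊆ N := fun y hy => by
    have := hy.1
    rwa [hD₀, Set.mem_preimage, hAJ] at this
  set V : K → E → E := fun w y => (w : E) + σ' (a (J (y - p)) w) with hV
  have hVs : ∀ w, ContDiffOn ℝ ∞ (V w) M := fun w =>
    contDiffOn_const.add (σ'.contDiff.comp_contDiffOn
      ((has.comp hJs.contDiffOn fun _ h => h).clm_apply contDiffOn_const))
  have hVd : ∀ w, ∀ y ∈ M, ∀ v, fderiv ℝ (V w) y v = σ' (fderiv ℝ a (J (y - p)) (J v) w) := by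
    intro w y hy v
    have h0 : HasFDerivAt (fun y => a (J (y - p)))
        ((fderiv ℝ a (J (y - p))).comp (J : E →L[ℝ] K × F)) y :=
      HasFDerivAt.comp (g := a) (f := fun y : E => J (y - p)) y (had (J (y - p)) hy) (hJd y)
    have h1 := h0.clm_apply (hasFDerivAt_const w y)
    have h2 := (σ'.hasFDerivAt.comp y h1).const_add (w : E)
    have h3 : HasFDerivAt (V w) _ y := h2
    rw [h3.fderiv]
    simp
  have hVθ : ∀ w, ∀ y ∈ M, θ y (V w y) = 0 := by
    intro w y hy
    have := hSa _ hy w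
    simp only [hS, hAJ, ContinuousLinearMap.comp_apply] at this
    change θ y ((w : E) + σ' (a (J (y - p)) w)) = 0
    rw [map_add, this, add_neg_cancel]
  have hIntg : ∀ x ∈ D, ∀ w w', fderiv ℝ a x (w, a x w) w' = fderiv ℝ a x (w', a x w') w := by
    intro x hx w w'
    have hy : A x ∈ M := by
      change J (A x - p) ∈ D
      rwa [hJA]
    have h1 := hinv M hMN hMo (V w) (V w') (hVs w) (hVs w') (hVθ w) (hVθ w') (A x) hy
    rw [hVd w' _ hy, hVd w _ hy] at h1
    simp only [hV, hJ3, hJA] at h1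
    rw [← map_sub] at h1
    exact sub_eq_zero.1 (hSi x hx _ h1)
  obtain ⟨N', hN'o, h0N', hN'D, H, hHs, hH0, hHw⟩ := frob_core hDo h0D has ha0 hIntg
  have hHd : ∀ y, J (y - p) ∈ N' →
      HasFDerivAt (fun y => H (J (y - p))) ((fderiv ℝ H (J (y - p))).comp (J : E →L[ℝ] K × F)) y := by
    intro y hy
    exact ((hHs.contDiffAt (hN'o.mem_nhds hy)).differentiableAt (by simp)).hasFDerivAt.comp y (hJd y)
  refine ⟨(fun y : E => J (y - p)) ⁻¹' N', fun y hy => hMN (hN'D hy), hN'o.preimage hJs.continuous,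
    by simpa using h0N', fun y => H (J (y - p)), hHs.comp hJs.contDiffOn fun _ h => h, ?_, ?_⟩
  · rw [(hHd p (by simpa using h0N')).fderiv]
    ext v
    simp [hH0, hJ1]
  · intro y hy v hv
    rw [(hHd y hy).fderiv]
    have hyD := hN'D hy
    have h1 := hHw _ hy (J v).1
    have h2 : (J v).2 = a (J (y - p)) (J v).1 := by
      apply sub_eq_zero.1
      apply hSi _ hyD
      rw [map_sub, hSa _ hyD]
      simp only [hS, hAJ, ContinuousLinearMap.comp_apply]
      rw [sub_neg_eq_add, ← map_add, add_comm, ← hJ4, hv]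
    rw [← h2] at h1
    exact h1

end

section
open scoped ContDiff Topology

/-- span of the values at `q` -/
noncomputable def evalSp {n : ℕ} (A : Set (VF n)) (q : Fin n → ℝ) : Submodule ℝ (Fin n → ℝ) :=
  Submodule.span ℝ { w : Fin n → ℝ | ∃ X ∈ A, w = X q }

lemma mem_evalSp {n : ℕ} {A : Set (VF n)} {X : VF n} (hX : X ∈ A) (q : Fin n → ℝ) :
    X q ∈ evalSp A q := Submodule.subset_span ⟨X, hX, rfl⟩

lemma evalSp_mono {n : ℕ} {A B : Set (VF n)} (h : A ⊆ B) (q : Fin n → ℝ) :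
    evalSp A q ≤ evalSp B q :=
  Submodule.span_mono fun _ ⟨X, hX, e⟩ => ⟨X, h hX, e⟩

lemma evalSp_le_ker {n : ℕ} {A : Set (VF n)} {q : Fin n → ℝ} {ξ : Covector n}
    (h : ∀ X ∈ A, ξ (X q) = 0) {v : Fin n → ℝ} (hv : v ∈ evalSp A q) : ξ v = 0 := by
  have : evalSp A q ≤ LinearMap.ker (ξ : (Fin n → ℝ) →ₗ[ℝ] ℝ) := by
    refine Submodule.span_le.2 ?_
    rintro _ ⟨X, hX, rfl⟩
    exact h X hX
  exact this hv

lemma spanOn_zero_mem {n : ℕ} (U : Set (Fin n → ℝ)) (S : Set (VF n)) : (fun _ => 0) ∈ spanOn U S :=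
  ⟨0, fun i => i.elim0, fun i => i.elim0, fun i => i.elim0, fun i => i.elim0, by simp⟩

lemma spanOn_subset {n : ℕ} (U : Set (Fin n → ℝ)) (S : Set (VF n)) : S ⊆ spanOn U S := fun X hX =>
  ⟨1, fun _ _ => 1, fun _ => X, fun _ => contDiffOn_const, fun _ => hX, by simp⟩

lemma spanOn_smooth {n : ℕ} {U : Set (Fin n → ℝ)} {S : Set (VF n)}
    (hS : ∀ X ∈ S, ContDiffOn ℝ ∞ X U) : ∀ X ∈ spanOn U S, ContDiffOn ℝ ∞ X U := by
  rintro X ⟨m, c, Y, hc, hY, hX⟩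
  exact (ContDiffOn.sum fun i _ => (hc i).smul (hS _ (hY i))).congr hX

lemma lieBracket_smooth {n : ℕ} {U : Set (Fin n → ℝ)} (hU : IsOpen U) {X Y : VF n}
    (hX : ContDiffOn ℝ ∞ X U) (hY : ContDiffOn ℝ ∞ Y U) : ContDiffOn ℝ ∞ (lieBracket X Y) U :=
  ((hY.fderiv_of_isOpen hU (by simp)).clm_apply hX).sub
    ((hX.fderiv_of_isOpen hU (by simp)).clm_apply hY)

section flags
variable {n : ℕ} {U : Set (Fin n → ℝ)} {Δ : Set (VF n)}

lemma derivedFlag_smooth (hU : IsOpen U) (hΔ : ∀ X ∈ Δ, ContDiffOn ℝ ∞ X U) (k : ℕ) :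
    ∀ X ∈ derivedFlag U Δ k, ContDiffOn ℝ ∞ X U := by
  induction k with
  | zero => exact hΔ
  | succ k ih =>
    rintro X ⟨Y, hY, Z, hZ, hX⟩
    refine ((ih Y hY).add (spanOn_smooth ?_ Z hZ)).congr hX
    rintro _ ⟨A, hA, B, hB, rfl⟩
    exact lieBracket_smooth hU (ih A hA) (ih B hB)

lemma derivedFlag_succ_subset (k : ℕ) : derivedFlag U Δ k ⊆ derivedFlag U Δ (k + 1) := fun X hX =>
  ⟨X, hX, _, spanOn_zero_mem _ _, by simp⟩

lemma derivedFlag_mono {j k : ℕ} (h : j ≤ k) : derivedFlag U Δ j ⊆ derivedFlag U Δ k := by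
  induction h with
  | refl => exact subset_rfl
  | step _ ih => exact ih.trans (derivedFlag_succ_subset _)

lemma bracket_mem_derivedFlag (h0 : (fun _ => 0) ∈ Δ) {k : ℕ} {X Y : VF n}
    (hX : X ∈ derivedFlag U Δ k) (hY : Y ∈ derivedFlag U Δ k) :
    lieBracket X Y ∈ derivedFlag U Δ (k + 1) :=
  ⟨fun _ => 0, derivedFlag_mono (Nat.zero_le k) h0, lieBracket X Y,
    spanOn_subset _ _ ⟨X, hX, Y, hY, rfl⟩, by simp⟩

lemma derivedFlag_succ_kill {k : ℕ} {q : Fin n → ℝ} (hq : q ∈ U) {ξ : Covector n}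
    (h1 : ∀ X ∈ derivedFlag U Δ k, ξ (X q) = 0)
    (h2 : ∀ X ∈ derivedFlag U Δ k, ∀ Y ∈ derivedFlag U Δ k, ξ (lieBracket X Y q) = 0) :
    ∀ X ∈ derivedFlag U Δ (k + 1), ξ (X q) = 0 := by
  rintro X ⟨Y, hY, Z, ⟨m, c, T, hc, hT, hZ⟩, hX⟩
  rw [hX q hq, hZ q hq, map_add, h1 Y hY, map_sum, zero_add]
  refine Finset.sum_eq_zero fun i _ => ?_
  obtain ⟨A, hA, B, hB, hAB⟩ := hT i
  rw [map_smul, hAB, h2 A hA B hB, smul_zero]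

lemma lieFlag_subset (k : ℕ) : lieFlag U Δ k ⊆ derivedFlag U Δ k := by
  induction k with
  | zero => exact subset_rfl
  | succ k ih =>
    rintro X ⟨Y, hY, Z, ⟨m, c, T, hc, hT, hZ⟩, hX⟩
    refine ⟨Y, ih hY, Z, ⟨m, c, T, hc, fun i => ?_, hZ⟩, hX⟩
    obtain ⟨A, hA, B, hB, hAB⟩ := hT i
    exact ⟨A, ih hA, B, derivedFlag_mono (Nat.zero_le k) hB, hAB⟩

lemma lieFlag_succ_kill {k : ℕ} {q : Fin n → ℝ} (hq : q ∈ U) {ξ : Covector n}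
    (h1 : ∀ X ∈ derivedFlag U Δ k, ξ (X q) = 0)
    (h2 : ∀ X ∈ derivedFlag U Δ k, ∀ Y ∈ Δ, ξ (lieBracket X Y q) = 0) :
    ∀ X ∈ lieFlag U Δ (k + 1), ξ (X q) = 0 := by
  rintro X ⟨Y, hY, Z, ⟨m, c, T, hc, hT, hZ⟩, hX⟩
  rw [hX q hq, hZ q hq, map_add, h1 Y (lieFlag_subset k hY), map_sum, zero_add]
  refine Finset.sum_eq_zero fun i _ => ?_
  obtain ⟨A, hA, B, hB, hAB⟩ := hT i
  rw [map_smul, hAB, h2 A (lieFlag_subset k hA) B hB, smul_zero]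
end flags

section ext
variable {n : ℕ}

lemma intExtDer_apply (om : OneForm n) (q v w : Fin n → ℝ) :
    intExtDer om q v w = fderiv ℝ om q v w - fderiv ℝ om q w v := rfl

lemma intExtDer_swap (om : OneForm n) (q v w : Fin n → ℝ) :
    intExtDer om q v w = - intExtDer om q w v := by simp [intExtDer_apply]

lemma intExtDer_self (om : OneForm n) (q v : Fin n → ℝ) : intExtDer om q v v = 0 := by
  simp [intExtDer_apply]

lemma intExtDer_add (om : OneForm n) (q v w u : Fin n → ℝ) :
    intExtDer om q (v + w) u = intExtDer om q v u + intExtDer om q w u := by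
  simp [intExtDer_apply]; ring

lemma intExtDer_smul (om : OneForm n) (q : Fin n → ℝ) (c : ℝ) (v u : Fin n → ℝ) :
    intExtDer om q (c • v) u = c * intExtDer om q v u := by
  simp [intExtDer_apply]; ring

lemma kill_deriv {om : OneForm n} {q : Fin n → ℝ} (hom : DifferentiableAt ℝ om q) {X : VF n}
    (hX : DifferentiableAt ℝ X q) (h : ∀ᶠ x in 𝓝 q, om x (X x) = 0) (v : Fin n → ℝ) :
    fderiv ℝ om q v (X q) = - om q (fderiv ℝ X q v) := by
  have h1 := hom.hasFDerivAt.clm_apply hX.hasFDerivAt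
  have h2 : (fun x => om x (X x)) =ᶠ[𝓝 q] fun _ => 0 := h
  have h3 := h1.unique ((hasFDerivAt_const (0:ℝ) q).congr_of_eventuallyEq h2)
  have h4 := congrArg (fun L => L v) h3
  simp at h4
  linarith

lemma cartan {om : OneForm n} {q : Fin n → ℝ} (hom : DifferentiableAt ℝ om q) {X Y : VF n}
    (hX : DifferentiableAt ℝ X q) (hY : DifferentiableAt ℝ Y q)
    (h : ∀ᶠ x in 𝓝 q, om x (X x) = 0) (h' : ∀ᶠ x in 𝓝 q, om x (Y x) = 0) :
    intExtDer om q (X q) (Y q) = - om q (lieBracket X Y q) := by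
  rw [intExtDer_apply, kill_deriv hom hX h, kill_deriv hom hY h', lieBracket, map_sub]
  ring

lemma brak {U : Set (Fin n → ℝ)} (hU : IsOpen U) {Δ : Set (VF n)}
    (hΔ : ∀ X ∈ Δ, ContDiffOn ℝ ∞ X U) (h0 : (fun _ => 0) ∈ Δ)
    {k : ℕ} {q : Fin n → ℝ} (hq : q ∈ U) {v w : Fin n → ℝ}
    (hv : v ∈ evalSp (derivedFlag U Δ k) q) (hw : w ∈ evalSp (derivedFlag U Δ k) q) :
    ∃ u ∈ evalSp (derivedFlag U Δ (k + 1)) q, ∀ om : OneForm n, DifferentiableAt ℝ om q →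
      (∀ X ∈ derivedFlag U Δ k, ∀ᶠ x in 𝓝 q, om x (X x) = 0) →
      intExtDer om q v w = - om q u := by
  have hd : ∀ X ∈ derivedFlag U Δ k, DifferentiableAt ℝ X q := fun X hX =>
    ((derivedFlag_smooth hU hΔ k X hX).contDiffAt (hU.mem_nhds hq)).differentiableAt (by simp)
  induction hv using Submodule.span_induction with
  | mem v hv =>
    obtain ⟨X, hX, rfl⟩ := hv
    induction hw using Submodule.span_induction with
    | mem w hw =>
      obtain ⟨Y, hY, rfl⟩ := hw
      exact ⟨_, mem_evalSp (bracket_mem_derivedFlag h0 hX hY) q, fun om hom hk =>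
        cartan hom (hd X hX) (hd Y hY) (hk X hX) (hk Y hY)⟩
    | zero => exact ⟨0, zero_mem _, fun om _ _ => by simp⟩
    | add w w' _ _ h h' =>
      obtain ⟨u, hu, e⟩ := h
      obtain ⟨u', hu', e'⟩ := h'
      exact ⟨u + u', add_mem hu hu', fun om hom hk => by
        rw [map_add, e om hom hk, e' om hom hk, map_add]; ring⟩
    | smul c w _ h =>
      obtain ⟨u, hu, e⟩ := h
      exact ⟨c • u, Submodule.smul_mem _ _ hu, fun om hom hk => by
        rw [map_smul, e om hom hk, map_smul, smul_neg]⟩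
  | zero => exact ⟨0, zero_mem _, fun om _ _ => by simp [intExtDer_apply]⟩
  | add w w' _ _ h h' =>
    obtain ⟨u, hu, e⟩ := h
    obtain ⟨u', hu', e'⟩ := h'
    exact ⟨u + u', add_mem hu hu', fun om hom hk => by
      rw [intExtDer_add, e om hom hk, e' om hom hk, map_add]; ring⟩
  | smul c w _ h =>
    obtain ⟨u, hu, e⟩ := h
    exact ⟨c • u, Submodule.smul_mem _ _ hu, fun om hom hk => by
      rw [intExtDer_smul, e om hom hk, map_smul, smul_eq_mul]; ring⟩
end ext

end

section
open scoped ContDiff Topology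

lemma codim_one_decomp {E : Type} [AddCommGroup E] [Module ℝ E] [FiniteDimensional ℝ E]
    {L D : Submodule ℝ E} (h : L ≤ D)
    (hd : Module.finrank ℝ D ≤ Module.finrank ℝ L + 1) :
    ∃ e ∈ D, ∀ v ∈ D, ∃ l ∈ L, ∃ c : ℝ, v = l + c • e := by
  by_cases hLD : D ≤ L
  · exact ⟨0, zero_mem _, fun v hv => ⟨v, hLD hv, 0, by simp⟩⟩
  · obtain ⟨e, heD, heL⟩ := SetLike.not_le_iff_exists.1 hLD
    refine ⟨e, heD, fun v hv => ?_⟩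
    have h1 : L < L ⊔ Submodule.span ℝ {e} := by
      refine lt_of_le_of_ne le_sup_left fun h => heL ?_
      rw [h]
      exact Submodule.mem_sup_right (Submodule.mem_span_singleton_self e)
    have h2 : L ⊔ Submodule.span ℝ {e} ≤ D :=
      sup_le h ((Submodule.span_singleton_le_iff_mem _ _).2 heD)
    have h3 := Submodule.finrank_lt_finrank_of_lt h1
    have h4 := Submodule.eq_of_le_of_finrank_le h2 (by omega)
    rw [← h4] at hv
    obtain ⟨l, hl, y, hy, rfl⟩ := Submodule.mem_sup.1 hv
    obtain ⟨c, rfl⟩ := Submodule.mem_span_singleton.1 hy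
    exact ⟨l, hl, c, rfl⟩

lemma plucker {n : ℕ} {om : OneForm n} {q : Fin n → ℝ} {L D : Submodule ℝ (Fin n → ℝ)} (h : L ≤ D)
    (hd : Module.finrank ℝ D ≤ Module.finrank ℝ L + 1)
    (hL : ∀ v ∈ L, ∀ w ∈ L, intExtDer om q v w = 0) {x y v w : Fin n → ℝ} (hx : x ∈ D) (hy : y ∈ D)
    (hv : v ∈ D) (hw : w ∈ D) :
    intExtDer om q x y * intExtDer om q v w - intExtDer om q x v * intExtDer om q y w
      + intExtDer om q x w * intExtDer om q y v = 0 := by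
  obtain ⟨e, he, hdec⟩ := codim_one_decomp h hd
  have key : ∀ a b : Fin n → ℝ, ∀ c d : ℝ, a ∈ L → b ∈ L →
      intExtDer om q (a + c • e) (b + d • e) =
        d * intExtDer om q a e - c * intExtDer om q b e := by
    intro a b c d ha hb
    rw [intExtDer_add, intExtDer_smul, map_add, map_add, map_smul, map_smul, hL a ha b hb,
      intExtDer_self, intExtDer_swap om q e b]
    simp only [smul_eq_mul]
    ring
  obtain ⟨l1, h1, c1, rfl⟩ := hdec x hx
  obtain ⟨l2, h2, c2, rfl⟩ := hdec y hy
  obtain ⟨l3, h3, c3, rfl⟩ := hdec v hv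
  obtain ⟨l4, h4, c4, rfl⟩ := hdec w hw
  rw [key _ _ _ _ h1 h2, key _ _ _ _ h3 h4, key _ _ _ _ h1 h3, key _ _ _ _ h2 h4,
    key _ _ _ _ h1 h4, key _ _ _ _ h2 h3]
  ring

lemma exists_form {n : ℕ} {W : Set (Fin n → ℝ)} (hW : IsOpen W) {A : Set (VF n)}
    (hA : ∀ X ∈ A, ContDiffOn ℝ ∞ X W) {p : Fin n → ℝ} (hp : p ∈ W)
    (hdim : ∀ q ∈ W, Module.finrank ℝ (evalSp A q) + 1 = n) :
    ∃ N ⊆ W, IsOpen N ∧ p ∈ N ∧ ∃ (om : OneForm n) (e : Fin n → ℝ), ContDiffOn ℝ ∞ om N ∧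
      ∀ q ∈ N, om q e = 1 ∧ ∀ v, om q v = 0 ↔ v ∈ evalSp A q := by
  obtain ⟨d, hd⟩ : ∃ d, d = Module.finrank ℝ (evalSp A p) := ⟨_, rfl⟩
  obtain ⟨f, hf, hfs, hfl⟩ : ∃ f : Fin d → (Fin n → ℝ), (∀ i, ∃ X ∈ A, f i = X p) ∧
      Submodule.span ℝ (Set.range f) = evalSp A p ∧ LinearIndependent ℝ f := by
    rw [hd]
    exact Submodule.exists_fun_fin_finrank_span_eq ℝ { w : Fin n → ℝ | ∃ X ∈ A, w = X p }
  choose Y hYA hYf using hf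
  have hdn : d + 1 = n := hd ▸ hdim p hp
  obtain ⟨e, he⟩ : ∃ e, e ∉ evalSp A p := by
    by_contra! hcon
    have : evalSp A p = ⊤ := eq_top_iff.2 fun v _ => hcon v
    rw [this, finrank_top, Module.finrank_fin_fun] at hd
    omega
  set T : (Fin n → ℝ) → ((Fin d → ℝ) × ℝ →L[ℝ] (Fin n → ℝ)) := fun q =>
    (∑ i, ((ContinuousLinearMap.proj i).comp
      (ContinuousLinearMap.fst ℝ (Fin d → ℝ) ℝ)).smulRight (Y i q)) +
    (ContinuousLinearMap.snd ℝ (Fin d → ℝ) ℝ).smulRight e with hT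
  have hTa : ∀ q c r, T q (c, r) = ∑ i, c i • Y i q + r • e := by
    intro q c r
    simp [hT, sum_apply]
  have hTs : ContDiffOn ℝ ∞ T W :=
    (ContDiffOn.sum fun i _ => contDiffOn_const.smulRight (hA _ (hYA i))).add contDiffOn_const
  have hinj : Function.Injective (T p) := by
    rw [injective_iff_map_eq_zero]
    rintro ⟨c, r⟩ h0
    rw [hTa] at h0
    have hmem : ∑ i, c i • Y i p ∈ evalSp A p :=
      Submodule.sum_mem _ fun i _ => Submodule.smul_mem _ _ (mem_evalSp (hYA i) p)
    have hr : r = 0 := by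
      by_contra hr
      refine he ?_
      have h2 : r • e = -∑ i, c i • Y i p := by rw [eq_neg_iff_add_eq_zero, add_comm]; exact h0
      have h3 : e = r⁻¹ • (r • e) := by rw [smul_smul, inv_mul_cancel₀ hr, one_smul]
      rw [h3, h2]
      exact Submodule.smul_mem _ _ (neg_mem hmem)
    subst hr
    have hc : c = 0 := by
      funext i
      refine Fintype.linearIndependent_iff.1 hfl c ?_ i
      simpa [hYf] using h0
    simp [hc]
  have hrange : T p ∈ Set.range ((↑) : (((Fin d → ℝ) × ℝ) ≃L[ℝ] (Fin n → ℝ)) →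
      (((Fin d → ℝ) × ℝ) →L[ℝ] (Fin n → ℝ))) := by
    refine ⟨(LinearMap.linearEquivOfInjective (T p : ((Fin d → ℝ) × ℝ) →ₗ[ℝ] (Fin n → ℝ)) hinj
      (by simp [hdn])).toContinuousLinearEquiv, ?_⟩
    ext x <;> rfl
  refine ⟨W ∩ T ⁻¹' (Set.range ((↑) : (((Fin d → ℝ) × ℝ) ≃L[ℝ] (Fin n → ℝ)) →
      (((Fin d → ℝ) × ℝ) →L[ℝ] (Fin n → ℝ)))),
    Set.inter_subset_left, hTs.continuousOn.isOpen_inter_preimage hW ContinuousLinearEquiv.isOpen,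
    ⟨hp, hrange⟩, fun q => (ContinuousLinearMap.snd ℝ (Fin d → ℝ) ℝ).comp
      (ContinuousLinearMap.inverse (T q)), e, ?_, ?_⟩
  · refine contDiffOn_const.clm_comp ?_
    intro x hx
    obtain ⟨e', he'⟩ := hx.2
    have h1 : ContDiffAt ℝ ∞ ContinuousLinearMap.inverse (T x) := by
      rw [← he']; exact contDiffAt_map_inverse e'
    exact (h1.comp x (hTs.contDiffAt (hW.mem_nhds hx.1))).contDiffWithinAt
  · intro q hq
    obtain ⟨e', he'⟩ := hq.2
    have hval : ∀ (c : Fin d → ℝ) (r : ℝ), (ContinuousLinearMap.inverse (T q) (∑ i, c i • Y i q + r • e)).2 = r := by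
      intro c r
      rw [← hTa, ← he']; simp
    set om : Covector n := (ContinuousLinearMap.snd ℝ (Fin d → ℝ) ℝ).comp
      (ContinuousLinearMap.inverse (T q)) with hom
    have h1 : om e = 1 := by
      have := hval 0 1
      simpa [hom] using this
    have hle : LinearMap.ker (om : (Fin n → ℝ) →ₗ[ℝ] ℝ) ≤ evalSp A q := by
      intro v hv
      have hv' : om v = 0 := hv
      have h2 : v = T q (e'.symm v) := by rw [← he']; simp
      rw [h2, show e'.symm v = ((e'.symm v).1, (e'.symm v).2) from rfl, hTa] at hv' ⊢
      have h3 : (e'.symm v).2 = 0 := by rw [← hv']; exact (hval _ _).symm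
      rw [h3, zero_smul, add_zero]
      exact Submodule.sum_mem _ fun i _ => Submodule.smul_mem _ _ (mem_evalSp (hYA i) q)
    have heq := Submodule.eq_of_le_of_finrank_le hle (by
      have h2 := LinearMap.finrank_range_add_finrank_ker (om : (Fin n → ℝ) →ₗ[ℝ] ℝ)
      have h3 := Submodule.finrank_le (LinearMap.range (om : (Fin n → ℝ) →ₗ[ℝ] ℝ))
      have h4 := hdim q hq.1
      rw [Module.finrank_self] at h3
      rw [Module.finrank_fin_fun] at h2
      omega)
    refine ⟨h1, fun v => ?_⟩
    rw [← heq]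
    rfl

end

section
open scoped ContDiff Topology

lemma intExtDer_smooth {n : ℕ} {N : Set (Fin n → ℝ)} (hN : IsOpen N) {om : OneForm n}
    (hom : ContDiffOn ℝ ∞ om N) {X : VF n} (hX : ContDiffOn ℝ ∞ X N) :
    ContDiffOn ℝ ∞ (fun x => intExtDer om x (X x)) N := by
  have h1 : ContDiffOn ℝ ∞ (fderiv ℝ om) N := hom.fderiv_of_isOpen hN (by simp)
  refine contDiffOn_clm_apply.2 fun w => ?_
  exact ((h1.clm_apply hX).clm_apply contDiffOn_const).sub
    ((h1.clm_apply contDiffOn_const).clm_apply hX)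

lemma two_le_inf : minSmoothness ℝ 2 ≤ (∞ : WithTop ℕ∞) := by
  simp; exact WithTop.coe_le_coe.2 (le_top : (2 : ℕ∞) ≤ ⊤)

lemma leibniz_br {n : ℕ} {T V W : VF n} {x : Fin n → ℝ} (hT : ContDiffAt ℝ ∞ T x)
    (hV : ContDiffAt ℝ ∞ V x) (hW : ContDiffAt ℝ ∞ W x) :
    lieBracket T (lieBracket V W) x =
      lieBracket (lieBracket T V) W x + lieBracket V (lieBracket T W) x :=
  VectorField.leibniz_identity_lieBracket (𝕜 := ℝ) two_le_inf hT hV hW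

lemma fderiv_closed {n : ℕ} {h : (Fin n → ℝ) → ℝ} {q : Fin n → ℝ} (hh : ContDiffAt ℝ ∞ h q)
    (v w : Fin n → ℝ) : intExtDer (fderiv ℝ h) q v w = 0 := by
  rw [intExtDer_apply, sub_eq_zero]
  exact hh.isSymmSndFDerivAt two_le_inf v w

lemma darboux {n : ℕ} {N₀ : Set (Fin n → ℝ)} (hN₀ : IsOpen N₀) {om : OneForm n}
    (hom : ContDiffOn ℝ ∞ om N₀) {e : Fin n → ℝ} (he : ∀ q ∈ N₀, om q e = 1) {X Y : VF n}
    (hXs : ContDiffOn ℝ ∞ X N₀) (hYs : ContDiffOn ℝ ∞ Y N₀)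
    (hX : ∀ q ∈ N₀, om q (X q) = 0) (hY : ∀ q ∈ N₀, om q (Y q) = 0) {p : Fin n → ℝ} (hp : p ∈ N₀)
    (hb : intExtDer om p (X p) (Y p) ≠ 0)
    (hpl : ∀ q ∈ N₀, ∀ x y v w, om q x = 0 → om q y = 0 → om q v = 0 → om q w = 0 →
      intExtDer om q x y * intExtDer om q v w - intExtDer om q x v * intExtDer om q y w
      + intExtDer om q x w * intExtDer om q y v = 0) :
    ∃ N ⊆ N₀, IsOpen N ∧ p ∈ N ∧ ∃ h z : (Fin n → ℝ) → ℝ, ContDiffOn ℝ ∞ h N ∧ ContDiffOn ℝ ∞ z N ∧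
      (∀ q ∈ N, fderiv ℝ h q (Y q) ≠ 0) ∧
      (∀ q ∈ N, ∀ v, om q v = 0 →
        fderiv ℝ z q v * fderiv ℝ h q (Y q) = fderiv ℝ z q (Y q) * fderiv ℝ h q v) ∧
      (∀ q ∈ N, fderiv ℝ z q e * fderiv ℝ h q (Y q) - fderiv ℝ z q (Y q) * fderiv ℝ h q e ≠ 0) := by
  have haX := intExtDer_smooth hN₀ hom hXs
  have haY := intExtDer_smooth hN₀ hom hYs
  -- shrink so that B(X,Y) ≠ 0
  set N₁ : Set (Fin n → ℝ) := N₀ ∩ (fun x => intExtDer om x (X x) (Y x)) ⁻¹' {0}ᶜ with hN₁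
  have hN₁o : IsOpen N₁ :=
    (haX.clm_apply hYs).continuousOn.isOpen_inter_preimage hN₀ isOpen_compl_singleton
  have hpN₁ : p ∈ N₁ := ⟨hp, hb⟩
  have hN₁0 : N₁ ⊆ N₀ := Set.inter_subset_left
  have homd : ∀ q ∈ N₀, DifferentiableAt ℝ om q := fun q hq =>
    (hom.contDiffAt (hN₀.mem_nhds hq)).differentiableAt (by simp)
  have hsd : ∀ {M : Set (Fin n → ℝ)} (_ : IsOpen M) {V : VF n} (_ : ContDiffOn ℝ ∞ V M),
      ∀ q ∈ M, DifferentiableAt ℝ V q := fun hM V hV q hq =>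
    (hV.contDiffAt (hM.mem_nhds hq)).differentiableAt (by simp)
  have hcar : ∀ {M : Set (Fin n → ℝ)} (_ : IsOpen M) (_ : M ⊆ N₀) {V W : VF n}
      (_ : ContDiffOn ℝ ∞ V M) (_ : ContDiffOn ℝ ∞ W M)
      (_ : ∀ q ∈ M, om q (V q) = 0) (_ : ∀ q ∈ M, om q (W q) = 0),
      ∀ q ∈ M, intExtDer om q (V q) (W q) = - om q (lieBracket V W q) := by
    intro M hM hMN V W hV hW h1 h2 q hq
    exact cartan (homd q (hMN hq)) (hsd hM hV q hq) (hsd hM hW q hq)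
      (Filter.mem_of_superset (hM.mem_nhds hq) h1) (Filter.mem_of_superset (hM.mem_nhds hq) h2)
  set θ : (Fin n → ℝ) → (Fin n → ℝ) →L[ℝ] ℝ × ℝ × ℝ := fun x =>
    (om x).prod ((intExtDer om x (X x)).prod (intExtDer om x (Y x))) with hθ
  have hθs : ContDiffOn ℝ ∞ θ N₁ := contDiffOn_clm_apply.2 fun w =>
    ((hom.mono hN₁0).clm_apply contDiffOn_const).prodMk
      (((haX.mono hN₁0).clm_apply contDiffOn_const).prodMk
        ((haY.mono hN₁0).clm_apply contDiffOn_const))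
  have hθ0 : ∀ x v, θ x v = 0 ↔ om x v = 0 ∧ intExtDer om x (X x) v = 0 ∧
      intExtDer om x (Y x) v = 0 := by
    intro x v
    simp [hθ, Prod.ext_iff]
  -- characteristic vectors
  have hchar : ∀ q ∈ N₁, ∀ v, θ q v = 0 → ∀ w, om q w = 0 → intExtDer om q v w = 0 := by
    intro q hq v hv w hw
    obtain ⟨h1, h2, h3⟩ := (hθ0 q v).1 hv
    have := hpl q hq.1 (X q) (Y q) v w (hX q hq.1) (hY q hq.1) h1 hw
    rw [h2, h3, zero_mul, mul_zero, sub_zero, add_zero] at this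
    exact (mul_eq_zero.1 this).resolve_left hq.2
  obtain ⟨N₂, hN₂1, hN₂o, hpN₂, H, hHs, hHp, hHk⟩ := frob_general hN₁o hθs hpN₁ (by
    rintro ⟨r, s, t⟩
    have hbY : intExtDer om p (Y p) (X p) = - intExtDer om p (X p) (Y p) := intExtDer_swap _ _ _ _
    refine ⟨r • e + ((s - r * intExtDer om p (X p) e) / intExtDer om p (X p) (Y p)) • Y p
      - ((t - r * intExtDer om p (Y p) e) / intExtDer om p (X p) (Y p)) • X p, ?_⟩
    have h1 := he p hp
    have h2 := hX p hp
    have h3 := hY p hp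
    refine Prod.ext ?_ (Prod.ext ?_ ?_)
    · change om p _ = r
      simp only [map_sub, map_add, map_smul, h1, h2, h3, smul_eq_mul]
      ring
    · change intExtDer om p (X p) _ = s
      simp only [map_sub, map_add, map_smul, intExtDer_self, smul_eq_mul]
      field_simp; ring
    · change intExtDer om p (Y p) _ = t
      simp only [map_sub, map_add, map_smul, intExtDer_self, hbY, smul_eq_mul]
      field_simp; ring) (by
    intro M hMN hM V W hV hW hV0 hW0 x hx
    change θ x (lieBracket V W x) = 0
    have hMN0 : M ⊆ N₀ := hMN.trans hN₁0
    have hVo : ∀ q ∈ M, om q (V q) = 0 := fun q hq => ((hθ0 _ _).1 (hV0 q hq)).1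
    have hWo : ∀ q ∈ M, om q (W q) = 0 := fun q hq => ((hθ0 _ _).1 (hW0 q hq)).1
    have hVW : ∀ q ∈ M, om q (lieBracket V W q) = 0 := by
      intro q hq
      have h1 := hcar hM hMN0 hV hW hVo hWo q hq
      rw [hchar q (hMN hq) _ (hV0 q hq) _ (hWo q hq)] at h1
      linarith
    have hT : ∀ T : VF n, ContDiffOn ℝ ∞ T N₀ → (∀ q ∈ N₀, om q (T q) = 0) →
        intExtDer om x (T x) (lieBracket V W x) = 0 := by
      intro T hTs hT0
      have hTs' := hTs.mono hMN0
      have hT0' : ∀ q ∈ M, om q (T q) = 0 := fun q hq => hT0 q (hMN0 hq)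
      have hTV : ∀ Z : VF n, ContDiffOn ℝ ∞ Z M → (∀ q ∈ M, θ q (Z q) = 0) →
          (∀ q ∈ M, om q (Z q) = 0) → ∀ q ∈ M, om q (lieBracket T Z q) = 0 := by
        intro Z hZ hZ0 hZo q hq
        have h1 := hcar hM hMN0 hTs' hZ hT0' hZo q hq
        rw [intExtDer_swap, hchar q (hMN hq) _ (hZ0 q hq) _ (hT0' q hq)] at h1
        linarith
      rw [hcar hM hMN0 hTs' (lieBracket_smooth hM hV hW) hT0' hVW x hx,
        leibniz_br (hTs'.contDiffAt (hM.mem_nhds hx)) (hV.contDiffAt (hM.mem_nhds hx))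
          (hW.contDiffAt (hM.mem_nhds hx)), map_add]
      have e1 := hcar hM hMN0 (lieBracket_smooth hM hTs' hV) hW (hTV V hV hV0 hVo) hWo x hx
      have e2 := hcar hM hMN0 hV (lieBracket_smooth hM hTs' hW) hVo (hTV W hW hW0 hWo) x hx
      rw [intExtDer_swap, hchar x (hMN hx) _ (hW0 x hx) _ (hTV V hV hV0 hVo x hx)] at e1
      rw [hchar x (hMN hx) _ (hV0 x hx) _ (hTV W hW hW0 hWo x hx)] at e2
      linarith
    exact (hθ0 _ _).2 ⟨hVW x hx, hT X hXs hX, hT Y hYs hY⟩)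
  -- first function
  set h : (Fin n → ℝ) → ℝ := fun x => (H x).2.1 with hh
  have hhs : ContDiffOn ℝ ∞ h N₂ := (contDiff_fst.comp contDiff_snd).comp_contDiffOn hHs
  have hhd : ∀ x ∈ N₂, ∀ v, fderiv ℝ h x v = (fderiv ℝ H x v).2.1 := by
    intro x hx v
    have h1 := ((hHs.contDiffAt (hN₂o.mem_nhds hx)).differentiableAt (by simp)).hasFDerivAt
    have h2 : HasFDerivAt h _ x := h1.snd.fst
    rw [h2.fderiv]; rfl
  have hdh : ContDiffOn ℝ ∞ (fderiv ℝ h) N₂ := hhs.fderiv_of_isOpen hN₂o (by simp)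
  have hN₂0 : N₂ ⊆ N₀ := hN₂1.trans hN₁0
  set N₃ : Set (Fin n → ℝ) := N₂ ∩ (fun x => fderiv ℝ h x (Y x)) ⁻¹' {0}ᶜ with hN₃
  have hN₃o : IsOpen N₃ := (hdh.clm_apply (hYs.mono hN₂0)).continuousOn.isOpen_inter_preimage
    hN₂o isOpen_compl_singleton
  have hpN₃ : p ∈ N₃ := by
    refine ⟨hpN₂, ?_⟩
    change fderiv ℝ h p (Y p) ≠ 0
    rw [hhd p hpN₂, hHp]
    exact hb
  have hN₃2 : N₃ ⊆ N₂ := Set.inter_subset_left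
  have hN₃0 : N₃ ⊆ N₀ := hN₃2.trans hN₂0
  have hdhk : ∀ q ∈ N₃, ∀ v w, om q v = 0 → om q w = 0 → fderiv ℝ h q v = 0 → fderiv ℝ h q w = 0 →
      intExtDer om q v w = 0 := by
    intro q hq v w hv hw hv' hw'
    set B := intExtDer om q with hB
    set u := B v w • Y q + B w (Y q) • v + B (Y q) v • w with hu
    have hP := hpl q (hN₃0 hq) (X q) (Y q) v w (hX q (hN₃0 hq)) (hY q (hN₃0 hq)) hv hw
    have hθu : θ q u = 0 := by
      refine (hθ0 _ _).2 ⟨?_, ?_, ?_⟩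
      · simp [hu, hv, hw, hY q (hN₃0 hq)]
      · simp only [hu, map_add, map_smul, smul_eq_mul]
        have := intExtDer_swap om q w (Y q)
        rw [← hB] at this hP ⊢
        rw [this]
        linarith
      · simp only [hu, map_add, map_smul, smul_eq_mul, intExtDer_self]
        have := intExtDer_swap om q w (Y q)
        rw [← hB] at this ⊢
        rw [this]
        ring
    have h1 : fderiv ℝ h q u = 0 := by
      rw [hhd q (hN₃2 hq), hHk q (hN₃2 hq) u hθu]; rfl
    simp only [hu, map_add, map_smul, smul_eq_mul, hv', hw', mul_zero, add_zero] at h1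
    exact (mul_eq_zero.1 h1).resolve_right hq.2
  set θ' : (Fin n → ℝ) → (Fin n → ℝ) →L[ℝ] ℝ × ℝ := fun x => (om x).prod (fderiv ℝ h x) with hθ'
  have hθ's : ContDiffOn ℝ ∞ θ' N₃ := contDiffOn_clm_apply.2 fun w =>
    ((hom.mono hN₃0).clm_apply contDiffOn_const).prodMk
      ((hdh.mono hN₃2).clm_apply contDiffOn_const)
  have hθ'0 : ∀ x v, θ' x v = 0 ↔ om x v = 0 ∧ fderiv ℝ h x v = 0 := by
    intro x v
    simp [hθ', Prod.ext_iff]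
  obtain ⟨N₄, hN₄3, hN₄o, hpN₄, H', hH's, hH'p, hH'k⟩ := frob_general hN₃o hθ's hpN₃ (by
    rintro ⟨r, s⟩
    have hne : fderiv ℝ h p (Y p) ≠ 0 := hpN₃.2
    refine ⟨r • e + ((s - r * fderiv ℝ h p e) / fderiv ℝ h p (Y p)) • Y p, ?_⟩
    have h1 := he p hp
    have h3 := hY p hp
    refine Prod.ext ?_ ?_
    · change om p _ = r
      simp only [map_add, map_smul, h1, h3, smul_eq_mul]
      ring
    · change fderiv ℝ h p _ = s
      simp only [map_add, map_smul, smul_eq_mul]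
      field_simp; ring) (by
    intro M hMN hM V W hV hW hV0 hW0 x hx
    change θ' x (lieBracket V W x) = 0
    have hMN0 : M ⊆ N₀ := hMN.trans hN₃0
    have hVo : ∀ q ∈ M, om q (V q) = 0 := fun q hq => ((hθ'0 _ _).1 (hV0 q hq)).1
    have hWo : ∀ q ∈ M, om q (W q) = 0 := fun q hq => ((hθ'0 _ _).1 (hW0 q hq)).1
    have hVh : ∀ q ∈ M, fderiv ℝ h q (V q) = 0 := fun q hq => ((hθ'0 _ _).1 (hV0 q hq)).2
    have hWh : ∀ q ∈ M, fderiv ℝ h q (W q) = 0 := fun q hq => ((hθ'0 _ _).1 (hW0 q hq)).2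
    refine (hθ'0 _ _).2 ⟨?_, ?_⟩
    · have h1 := hcar hM hMN0 hV hW hVo hWo x hx
      rw [hdhk x (hMN hx) _ _ (hVo x hx) (hWo x hx) (hVh x hx) (hWh x hx)] at h1
      linarith
    · have hxN := hN₃2 (hMN hx)
      have h1 := cartan ((hdh.contDiffAt (hN₂o.mem_nhds hxN)).differentiableAt (by simp))
        (hsd hM hV x hx) (hsd hM hW x hx)
        (Filter.mem_of_superset (hM.mem_nhds hx) hVh) (Filter.mem_of_superset (hM.mem_nhds hx) hWh)
      rw [fderiv_closed (hhs.contDiffAt (hN₂o.mem_nhds hxN))] at h1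
      linarith)
  set z : (Fin n → ℝ) → ℝ := fun x => (H' x).1 with hz
  have hzs : ContDiffOn ℝ ∞ z N₄ := contDiff_fst.comp_contDiffOn hH's
  have hzd : ∀ x ∈ N₄, ∀ v, fderiv ℝ z x v = (fderiv ℝ H' x v).1 := by
    intro x hx v
    have h1 := ((hH's.contDiffAt (hN₄o.mem_nhds hx)).differentiableAt (by simp)).hasFDerivAt
    have h2 : HasFDerivAt z _ x := h1.fst
    rw [h2.fderiv]; rfl
  have hN₄2 : N₄ ⊆ N₂ := hN₄3.trans hN₃2
  have hN₄0 : N₄ ⊆ N₀ := hN₄3.trans hN₃0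
  have hdz : ContDiffOn ℝ ∞ (fderiv ℝ z) N₄ := hzs.fderiv_of_isOpen hN₄o (by simp)
  have hdh4 := hdh.mono hN₄2
  have hY4 := hYs.mono hN₄0
  have hfun : ContDiffOn ℝ ∞ (fun q => fderiv ℝ z q e * fderiv ℝ h q (Y q) -
      fderiv ℝ z q (Y q) * fderiv ℝ h q e) N₄ :=
    ((hdz.clm_apply contDiffOn_const).mul (hdh4.clm_apply hY4)).sub
      ((hdz.clm_apply hY4).mul (hdh4.clm_apply contDiffOn_const))
  refine ⟨N₄ ∩ (fun q => fderiv ℝ z q e * fderiv ℝ h q (Y q) -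
      fderiv ℝ z q (Y q) * fderiv ℝ h q e) ⁻¹' {0}ᶜ, fun q hq => hN₄0 hq.1,
      hfun.continuousOn.isOpen_inter_preimage hN₄o isOpen_compl_singleton, ⟨hpN₄, ?_⟩, h, z,
      hhs.mono fun q hq => hN₄2 hq.1, hzs.mono fun q hq => hq.1, fun q hq => (hN₄3 hq.1).2, ?_,
      fun q hq => hq.2⟩
  · change _ ≠ (0:ℝ)
    simp only
    rw [hzd p hpN₄, hzd p hpN₄, hH'p]
    have h1 : (θ' p e).1 = 1 := he p hp
    have h2 : (θ' p (Y p)).1 = 0 := hY p hp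
    rw [h1, h2, one_mul, zero_mul, sub_zero]
    exact hpN₃.2
  · intro q hq v hv
    have hne : fderiv ℝ h q (Y q) ≠ 0 := (hN₄3 hq.1).2
    have h1 : θ' q (fderiv ℝ h q (Y q) • v - fderiv ℝ h q v • Y q) = 0 := by
      refine (hθ'0 _ _).2 ⟨?_, ?_⟩
      · simp [hv, hY q (hN₄0 hq.1)]
      · simp; ring
    have h2 := hzd q hq.1 (fderiv ℝ h q (Y q) • v - fderiv ℝ h q v • Y q)
    rw [hH'k q hq.1 _ h1] at h2
    simp at h2
    linarith

end

section
open scoped ContDiff Topology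

def DimG {n : ℕ} (U W : Set (Fin n → ℝ)) (Δ : Set (VF n)) : Prop :=
  ∀ k : ℕ, k + 2 ≤ n → ∀ q ∈ W, Module.finrank ℝ (evalSp (derivedFlag U Δ k) q) = 2 + k

def Base {n : ℕ} (U N : Set (Fin n → ℝ)) (Δ : Set (VF n)) (Y : VF n)
    (h z : (Fin n → ℝ) → ℝ) : Prop :=
  ContDiffOn ℝ ∞ h N ∧ ContDiffOn ℝ ∞ z N ∧ (∀ q ∈ N, fderiv ℝ h q (Y q) ≠ 0) ∧
  (∀ q ∈ N, ∃ v, fderiv ℝ z q v * fderiv ℝ h q (Y q) - fderiv ℝ z q (Y q) * fderiv ℝ h q v ≠ 0) ∧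
  (3 ≤ n → ∀ X ∈ derivedFlag U Δ (n - 3), ∀ q ∈ N,
    fderiv ℝ z q (X q) * fderiv ℝ h q (Y q) = fderiv ℝ z q (Y q) * fderiv ℝ h q (X q))

lemma base_two {n : ℕ} (hn : n = 2) {U W : Set (Fin n → ℝ)} (hU : IsOpen U) (hW : IsOpen W)
    (hWU : W ⊆ U) {Δ : Set (VF n)} (hΔ : ∀ X ∈ Δ, ContDiffOn ℝ ∞ X U)
    (hG : DimG U W Δ) {p : Fin n → ℝ} (hp : p ∈ W) :
    ∃ N ⊆ W, IsOpen N ∧ p ∈ N ∧ ∃ Y ∈ Δ, ∃ h z, Base U N Δ Y h z := by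
  have h1 : ∃ Y ∈ Δ, Y p ≠ 0 := by
    by_contra! hc
    have h2 := hG 0 (by omega) p hp
    have h3 : evalSp (derivedFlag U Δ 0) p = ⊥ := by
      rw [evalSp, Submodule.span_eq_bot]
      rintro w ⟨X, hX, rfl⟩
      exact hc X hX
    rw [h3, finrank_bot] at h2
    omega
  obtain ⟨Y, hY, hYp⟩ := h1
  obtain ⟨i, hi⟩ := Function.ne_iff.1 hYp
  subst hn
  obtain ⟨j, hj⟩ : ∃ j : Fin 2, j ≠ i := exists_ne i
  have hYs := (hΔ Y hY).mono hWU
  have hd : ∀ (i : Fin 2) (q : Fin 2 → ℝ), fderiv ℝ (fun x : Fin 2 → ℝ => x i) q =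
      ContinuousLinearMap.proj (R := ℝ) (φ := fun _ : Fin 2 => ℝ) i := fun i q =>
    (ContinuousLinearMap.proj (R := ℝ) (φ := fun _ : Fin 2 => ℝ) i).fderiv
  refine ⟨W ∩ (fun x => Y x i) ⁻¹' {0}ᶜ, Set.inter_subset_left,
    ((contDiffOn_pi.1 hYs) i).continuousOn.isOpen_inter_preimage hW isOpen_compl_singleton,
    ⟨hp, hi⟩, Y, hY, fun x => x i, fun x => x j, (contDiff_apply ℝ ℝ i).contDiffOn, (contDiff_apply ℝ ℝ j).contDiffOn,
    ?_, ?_, by omega⟩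
  · intro q hq
    rw [hd]
    exact hq.2
  · intro q hq
    refine ⟨Pi.single j 1, ?_⟩
    rw [hd, hd]
    simp [hj.symm]
    exact hq.2

lemma base_three {n : ℕ} (hn : 3 ≤ n) {U W : Set (Fin n → ℝ)} (hU : IsOpen U) (hW : IsOpen W)
    (hWU : W ⊆ U) {Δ : Set (VF n)} (hΔ : ∀ X ∈ Δ, ContDiffOn ℝ ∞ X U)
    (h0 : (fun _ => 0) ∈ Δ)
    (hG : DimG U W Δ) {p : Fin n → ℝ} (hp : p ∈ W)
    (hF : Module.finrank ℝ (evalSp (lieFlag U Δ (n - 2)) p) = n) :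
    ∃ N ⊆ W, IsOpen N ∧ p ∈ N ∧ ∃ Y ∈ Δ, ∃ h z, Base U N Δ Y h z := by
  have hGs := derivedFlag_smooth hU hΔ (n - 3)
  obtain ⟨N₀, hN₀W, hN₀, hpN₀, om, e, hom, home⟩ := exists_form hW
    (A := derivedFlag U Δ (n - 3)) (fun X hX => (hGs X hX).mono hWU) hp
    (fun q hq => by rw [hG (n - 3) (by omega) q hq]; omega)
  have hker : ∀ X ∈ derivedFlag U Δ (n - 3), ∀ q ∈ N₀, om q (X q) = 0 := fun X hX q hq =>
    ((home q hq).2 _).2 (mem_evalSp hX q)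
  have homd : ∀ q ∈ N₀, DifferentiableAt ℝ om q := fun q hq =>
    (hom.contDiffAt (hN₀.mem_nhds hq)).differentiableAt (by simp)
  have hXd : ∀ X ∈ derivedFlag U Δ (n - 3), ∀ q ∈ N₀, DifferentiableAt ℝ X q := fun X hX q hq =>
    ((hGs X hX).contDiffAt (hU.mem_nhds (hWU (hN₀W hq)))).differentiableAt (by simp)
  have hev : ∀ X ∈ derivedFlag U Δ (n - 3), ∀ q ∈ N₀, ∀ᶠ x in 𝓝 q, om x (X x) = 0 :=
    fun X hX q hq => Filter.mem_of_superset (hN₀.mem_nhds hq) (hker X hX)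
  have hsub : Δ ⊆ derivedFlag U Δ (n - 3) := derivedFlag_mono (j := 0) (Nat.zero_le _)
  -- existence of a pair
  have hex : ∃ X ∈ derivedFlag U Δ (n - 3), ∃ Y ∈ Δ, intExtDer om p (X p) (Y p) ≠ 0 := by
    by_contra! hc
    have h1 := lieFlag_succ_kill (U := U) (Δ := Δ) (k := n - 3) (hWU hp) (ξ := om p)
      (fun X hX => hker X hX p hpN₀) (fun X hX Y hY => by
        have := cartan (homd p hpN₀) (hXd X hX p hpN₀) (hXd Y (hsub hY) p hpN₀)
          (hev X hX p hpN₀) (hev Y (hsub hY) p hpN₀)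
        rw [hc X hX Y hY] at this
        linarith)
    rw [show n - 3 + 1 = n - 2 by omega] at h1
    have h2 : evalSp (lieFlag U Δ (n - 2)) p = ⊤ :=
      Submodule.eq_top_of_finrank_eq (by rw [hF]; simp)
    have h3 : om p e = 0 := evalSp_le_ker h1 (by rw [h2]; trivial)
    rw [(home p hpN₀).1] at h3
    exact one_ne_zero h3
  obtain ⟨X, hX, Y, hY, hXY⟩ := hex
  -- isotropic codimension one subspace
  have hiso : ∀ q ∈ N₀, ∃ L ≤ evalSp (derivedFlag U Δ (n - 3)) q,
      Module.finrank ℝ (evalSp (derivedFlag U Δ (n - 3)) q) ≤ Module.finrank ℝ L + 1 ∧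
      (∀ v ∈ L, ∀ w ∈ L, intExtDer om q v w = 0) := by
    intro q hq
    rcases Nat.lt_or_ge 3 n with h4 | h4
    · refine ⟨evalSp (derivedFlag U Δ (n - 4)) q, evalSp_mono (derivedFlag_mono (by omega)) q, ?_, ?_⟩
      · rw [hG _ (by omega) q (hN₀W hq), hG _ (by omega) q (hN₀W hq)]; omega
      · intro v hv w hw
        obtain ⟨u, hu, hu'⟩ := brak hU hΔ h0 (hWU (hN₀W hq)) hv hw
        rw [hu' om (homd q hq) (fun X hX => hev X (derivedFlag_mono (by omega) hX) q hq)]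
        rw [show n - 4 + 1 = n - 3 by omega] at hu
        rw [((home q hq).2 u).2 hu, neg_zero]
    · have h5 := hG (n - 3) (by omega) q (hN₀W hq)
      have h6 : 0 < Module.finrank ℝ (evalSp (derivedFlag U Δ (n - 3)) q) := by omega
      haveI := Module.finrank_pos_iff.1 h6
      obtain ⟨⟨v, hv⟩, hv0⟩ := exists_ne (0 : evalSp (derivedFlag U Δ (n - 3)) q)
      have hv0' : v ≠ 0 := fun h => hv0 (Subtype.ext h)
      refine ⟨ℝ ∙ v, (Submodule.span_singleton_le_iff_mem _ _).2 hv, ?_, ?_⟩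
      · rw [finrank_span_singleton hv0']; omega
      · intro a ha b hb
        obtain ⟨s, rfl⟩ := Submodule.mem_span_singleton.1 ha
        obtain ⟨t, rfl⟩ := Submodule.mem_span_singleton.1 hb
        rw [intExtDer_smul, map_smul, intExtDer_self, smul_zero, mul_zero]
  obtain ⟨N, hNN₀, hN, hpN, h, z, hh, hz, hhY, hk, hne⟩ := darboux hN₀ hom (fun q hq => (home q hq).1)
    ((hGs X hX).mono (hN₀W.trans hWU)) ((hΔ Y hY).mono (hN₀W.trans hWU)) (hker X hX)
    (hker Y (hsub hY)) hpN₀ hXY (by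
      intro q hq x y v w hx hy hv hw
      obtain ⟨L, hL, hd, hi⟩ := hiso q hq
      exact plucker hL hd hi (((home q hq).2 _).1 hx) (((home q hq).2 _).1 hy)
        (((home q hq).2 _).1 hv) (((home q hq).2 _).1 hw))
  exact ⟨N, hNN₀.trans hN₀W, hN, hpN, Y, hY, h, z, hh, hz, hhY, fun q hq => ⟨e, hne q hq⟩,
    fun _ X hX q hq => hk q hq _ (hker X hX q (hNN₀ hq))⟩

end

section
open scoped ContDiff Topology

noncomputable def zt {n : ℕ} (Y : VF n) (h z : (Fin n → ℝ) → ℝ) : ℕ → (Fin n → ℝ) → ℝ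
  | 0 => z
  | m + 1 => fun x => fderiv ℝ (zt Y h z m) x (Y x) / fderiv ℝ h x (Y x)

noncomputable def omt {n : ℕ} (Y : VF n) (h z : (Fin n → ℝ) → ℝ) (m : ℕ) : OneForm n :=
  fun x => fderiv ℝ (zt Y h z m) x - zt Y h z (m + 1) x • fderiv ℝ h x

structure Tw {n : ℕ} (U N : Set (Fin n → ℝ)) (Δ : Set (VF n)) (Y : VF n)
    (h z : (Fin n → ℝ) → ℝ) : Prop where
  hn : 2 ≤ n
  hU : IsOpen U
  hN : IsOpen N
  hNU : N ⊆ U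
  hΔ : ∀ X ∈ Δ, ContDiffOn ℝ ∞ X U
  h0 : (fun _ => 0) ∈ Δ
  hG : DimG U N Δ
  hY : Y ∈ Δ
  hB : Base U N Δ Y h z

namespace Tw

variable {n : ℕ} {U N : Set (Fin n → ℝ)} {Δ : Set (VF n)} {Y : VF n} {h z : (Fin n → ℝ) → ℝ}

lemma hYs (T : Tw U N Δ Y h z) : ContDiffOn ℝ ∞ Y N := (T.hΔ Y T.hY).mono T.hNU

lemma hdh (T : Tw U N Δ Y h z) : ContDiffOn ℝ ∞ (fderiv ℝ h) N :=
  T.hB.1.fderiv_of_isOpen T.hN (by simp)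

lemma hne (T : Tw U N Δ Y h z) {q : Fin n → ℝ} (hq : q ∈ N) : fderiv ℝ h q (Y q) ≠ 0 :=
  T.hB.2.2.1 q hq

lemma zt_smooth (T : Tw U N Δ Y h z) (m : ℕ) : ContDiffOn ℝ ∞ (zt Y h z m) N := by
  induction m with
  | zero => exact T.hB.2.1
  | succ m ih =>
    have h1 : ContDiffOn ℝ ∞ (fderiv ℝ (zt Y h z m)) N := ih.fderiv_of_isOpen T.hN (by simp)
    exact (h1.clm_apply T.hYs).div (T.hdh.clm_apply T.hYs) (fun q hq => T.hne hq)

lemma dzt (T : Tw U N Δ Y h z) (m : ℕ) : ContDiffOn ℝ ∞ (fderiv ℝ (zt Y h z m)) N :=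
  (T.zt_smooth m).fderiv_of_isOpen T.hN (by simp)

lemma diffAt {G : Type*} [NormedAddCommGroup G] [NormedSpace ℝ G] (T : Tw U N Δ Y h z)
    {a : (Fin n → ℝ) → G} (ha : ContDiffOn ℝ ∞ a N)
    {q : Fin n → ℝ} (hq : q ∈ N) : DifferentiableAt ℝ a q :=
  (ha.contDiffAt (T.hN.mem_nhds hq)).differentiableAt (by simp)

lemma omt_smooth (T : Tw U N Δ Y h z) (m : ℕ) : ContDiffOn ℝ ∞ (omt Y h z m) N :=
  (T.dzt m).sub ((T.zt_smooth (m + 1)).smul T.hdh)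

lemma omt_apply (m : ℕ) (q v : Fin n → ℝ) :
    omt Y h z m q v = fderiv ℝ (zt Y h z m) q v - zt Y h z (m + 1) q * fderiv ℝ h q v := rfl

lemma zt_succ (T : Tw U N Δ Y h z) (m : ℕ) {q : Fin n → ℝ} (hq : q ∈ N) :
    fderiv ℝ (zt Y h z m) q (Y q) = zt Y h z (m + 1) q * fderiv ℝ h q (Y q) :=
  (div_mul_cancel₀ _ (T.hne hq)).symm

lemma omt_Y (T : Tw U N Δ Y h z) (m : ℕ) {q : Fin n → ℝ} (hq : q ∈ N) :
    omt Y h z m q (Y q) = 0 := by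
  rw [omt_apply, T.zt_succ m hq, sub_self]

lemma omt_ext (T : Tw U N Δ Y h z) (m : ℕ) {q : Fin n → ℝ} (hq : q ∈ N) (v w : Fin n → ℝ) :
    intExtDer (omt Y h z m) q v w =
      -(fderiv ℝ (zt Y h z (m + 1)) q v * fderiv ℝ h q w -
        fderiv ℝ (zt Y h z (m + 1)) q w * fderiv ℝ h q v) := by
  have h1 := (T.diffAt (T.dzt m) hq).hasFDerivAt
  have h2 := (T.diffAt T.hdh hq).hasFDerivAt
  have h3 := (T.diffAt (T.zt_smooth (m + 1)) hq).hasFDerivAt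
  have h4 : HasFDerivAt (omt Y h z m) _ q := h1.sub (h3.smul h2)
  have c1 := fderiv_closed ((T.zt_smooth m).contDiffAt (T.hN.mem_nhds hq)) v w
  have c2 := fderiv_closed (T.hB.1.contDiffAt (T.hN.mem_nhds hq)) v w
  rw [intExtDer_apply] at c1 c2 ⊢
  rw [h4.fderiv]
  simp
  linear_combination c1 - zt Y h z (m + 1) q * c2

lemma Gs (T : Tw U N Δ Y h z) {k : ℕ} {X : VF n} (hX : X ∈ derivedFlag U Δ k) :
    ContDiffOn ℝ ∞ X N := (derivedFlag_smooth T.hU T.hΔ k X hX).mono T.hNU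

lemma YG (T : Tw U N Δ Y h z) (k : ℕ) : Y ∈ derivedFlag U Δ k :=
  derivedFlag_mono (Nat.zero_le k) T.hY

lemma killT (T : Tw U N Δ Y h z) (m : ℕ) : ∀ k, k + m + 3 ≤ n → ∀ X ∈ derivedFlag U Δ k, ∀ q ∈ N,
    omt Y h z m q (X q) = 0 := by
  induction m with
  | zero =>
    intro k hk X hX q hq
    have h1 := T.hB.2.2.2.2 (by omega) X (derivedFlag_mono (by omega) hX) q hq
    have h2 := T.zt_succ 0 hq
    have h3 := T.hne hq
    rw [omt_apply]
    change fderiv ℝ z q (Y q) = _ at h2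
    change fderiv ℝ z q (X q) - _ = 0
    rw [h2] at h1
    have : (fderiv ℝ z q (X q) - zt Y h z (0 + 1) q * fderiv ℝ h q (X q)) * fderiv ℝ h q (Y q) = 0 := by
      linear_combination h1
    exact (mul_eq_zero.1 this).resolve_right h3
  | succ m ih =>
    intro k hk X hX q hq
    have h1 := cartan (T.diffAt (T.omt_smooth m) hq) (T.diffAt (T.Gs hX) hq) (T.diffAt T.hYs hq)
      (Filter.mem_of_superset (T.hN.mem_nhds hq) (ih k (by omega) X hX))
      (Filter.mem_of_superset (T.hN.mem_nhds hq) (fun x hx => T.omt_Y m hx))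
    rw [ih (k + 1) (by omega) _ (bracket_mem_derivedFlag T.h0 hX (T.YG k)) q hq, T.omt_ext m hq,
      T.zt_succ (m + 1) hq] at h1
    rw [omt_apply]
    have : (fderiv ℝ (zt Y h z (m + 1)) q (X q) - zt Y h z (m + 1 + 1) q * fderiv ℝ h q (X q))
        * fderiv ℝ h q (Y q) = 0 := by
      linear_combination -h1
    exact (mul_eq_zero.1 this).resolve_right (T.hne hq)

lemma topG (T : Tw U N Δ Y h z) {q : Fin n → ℝ} (hq : q ∈ N) :
    evalSp (derivedFlag U Δ (n - 2)) q = ⊤ := by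
  have := T.hn
  refine Submodule.eq_top_of_finrank_eq ?_
  rw [T.hG (n - 2) (by omega) q hq]; simp; omega

lemma nonkill (T : Tw U N Δ Y h z) (m : ℕ) : ∀ k, k + m + 2 = n → ∀ q ∈ N,
    ¬ ∀ X ∈ derivedFlag U Δ k, omt Y h z m q (X q) = 0 := by
  induction m with
  | zero =>
    intro k hk q hq hc
    obtain ⟨v, hv⟩ := T.hB.2.2.2.1 q hq
    apply hv
    have hv' : omt Y h z 0 q v = 0 := evalSp_le_ker hc (by
      rw [show k = n - 2 by omega, T.topG hq]; trivial)
    rw [omt_apply] at hv'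
    have h2 := T.zt_succ 0 hq
    change fderiv ℝ z q (Y q) = _ at h2
    change fderiv ℝ z q v - _ = 0 at hv'
    rw [h2]
    linear_combination hv' * fderiv ℝ h q (Y q)
  | succ m ih =>
    intro k hk q hq hc
    refine ih (k + 1) (by omega) q hq (derivedFlag_succ_kill (T.hNU hq)
      (fun X hX => T.killT m k (by omega) X hX q hq) ?_)
    intro X hX X' hX'
    have h1 := cartan (T.diffAt (T.omt_smooth m) hq) (T.diffAt (T.Gs hX) hq) (T.diffAt (T.Gs hX') hq)
      (Filter.mem_of_superset (T.hN.mem_nhds hq) (T.killT m k (by omega) X hX))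
      (Filter.mem_of_superset (T.hN.mem_nhds hq) (T.killT m k (by omega) X' hX'))
    rw [T.omt_ext m hq] at h1
    have h2 := hc X hX
    have h3 := hc X' hX'
    rw [omt_apply] at h2 h3
    linear_combination h1 + h2 * fderiv ℝ h q (X' q) - h3 * fderiv ℝ h q (X q)

lemma ker_lt (T : Tw U N Δ Y h z) {m k : ℕ} (hk : k + m + 2 = n) {q : Fin n → ℝ} (hq : q ∈ N) :
    Module.finrank ℝ ↥(evalSp (derivedFlag U Δ k) q ⊓ LinearMap.ker (omt Y h z m q : (Fin n → ℝ) →ₗ[ℝ] ℝ)) <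
      2 + k := by
  rw [← T.hG k (by omega) q hq]
  refine Submodule.finrank_lt_finrank_of_lt (lt_of_le_of_ne inf_le_left ?_)
  intro hc
  refine T.nonkill m k hk q hq fun X hX => ?_
  have := mem_evalSp hX q
  rw [← hc] at this
  exact this.2

lemma capC (T : Tw U N Δ Y h z) {q : Fin n → ℝ} (hq : q ∈ N) {v : Fin n → ℝ} (j : ℕ)
    (hj : j + 2 ≤ n) (hv : ∀ i < j, omt Y h z i q v = 0) :
    v ∈ evalSp (derivedFlag U Δ (n - 2 - j)) q := by
  induction j with
  | zero => rw [Nat.sub_zero, T.topG hq]; trivial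
  | succ j ih =>
    have h1 := ih (by omega) (fun i hi => hv i (by omega))
    have h2 := T.ker_lt (m := j) (k := n - 2 - j) (by omega) hq
    have h3 := T.hG (n - 2 - (j + 1)) (by omega) q hq
    have h4 : evalSp (derivedFlag U Δ (n - 2 - (j + 1))) q ≤ evalSp (derivedFlag U Δ (n - 2 - j)) q ⊓
        LinearMap.ker (omt Y h z j q : (Fin n → ℝ) →ₗ[ℝ] ℝ) := by
      refine le_inf (evalSp_mono (derivedFlag_mono (by omega)) q) fun w hw => ?_
      exact evalSp_le_ker (fun X hX => T.killT j _ (by omega) X hX q hq) hw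
    rw [Submodule.eq_of_le_of_finrank_le h4 (by omega)]
    exact ⟨h1, hv j (by omega)⟩

lemma indep (T : Tw U N Δ Y h z) {q : Fin n → ℝ} (hq : q ∈ N) {v : Fin n → ℝ}
    (hv : ∀ m, m + 2 ≤ n → fderiv ℝ (zt Y h z m) q v = 0) (hh : fderiv ℝ h q v = 0) : v = 0 := by
  have hn := T.hn
  have hom : ∀ m, m + 2 ≤ n → omt Y h z m q v = 0 := fun m hm => by
    rw [omt_apply, hv m hm, hh]; ring
  have h1 := T.capC hq (v := v) (n - 2) (by omega) (fun i hi => hom i (by omega))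
  rw [Nat.sub_self] at h1
  have h2 := T.ker_lt (m := n - 2) (k := 0) (by omega) hq
  have hY0 : Y q ≠ 0 := fun h => T.hne hq (by rw [h, map_zero])
  have h3 : (ℝ ∙ Y q) ≤ evalSp (derivedFlag U Δ 0) q ⊓
        LinearMap.ker (omt Y h z (n - 2) q : (Fin n → ℝ) →ₗ[ℝ] ℝ) :=
    (Submodule.span_singleton_le_iff_mem _ _).2 ⟨mem_evalSp (T.YG 0) q, T.omt_Y _ hq⟩
  have h4 := Submodule.eq_of_le_of_finrank_le h3 (by rw [finrank_span_singleton hY0]; omega)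
  have h5 : v ∈ (ℝ ∙ Y q) := by
    rw [h4]; exact ⟨h1, hom _ (by omega)⟩
  obtain ⟨c, rfl⟩ := Submodule.mem_span_singleton.1 h5
  rw [map_smul, smul_eq_mul] at hh
  rw [(mul_eq_zero.1 hh).resolve_right (T.hne hq), zero_smul]

lemma indep_two (T : Tw U N Δ Y h z) {q : Fin n → ℝ} (hq : q ∈ N) {v : Fin n → ℝ}
    (hv0 : v ∈ evalSp (derivedFlag U Δ 0) q)
    (hv : fderiv ℝ (zt Y h z (n - 2)) q v = 0) (hh : fderiv ℝ h q v = 0) : v = 0 := by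
  refine T.indep hq (fun m hm => ?_) hh
  rcases Nat.lt_or_ge (m + 2) n with h1 | h1
  · have h2 := evalSp_le_ker (fun X hX => T.killT m 0 (by omega) X hX q hq) hv0
    rw [omt_apply, hh] at h2
    linarith
  · rwa [show m = n - 2 by omega]

end Tw

end

section
open scoped ContDiff Topology

namespace Tw

variable {n : ℕ} {U N : Set (Fin n → ℝ)} {Δ : Set (VF n)} {Y : VF n} {h z : (Fin n → ℝ) → ℝ}

/-- global extension of `omt j` near `q`. -/
lemma omt_extend (T : Tw U N Δ Y h z) {q : Fin n → ℝ} (hq : q ∈ N) {j k : ℕ} (hjk : k + j + 3 ≤ n) :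
    ∃ ρ ∈ annihilatorOn U (derivedFlag U Δ k), ρ =ᶠ[𝓝 q] omt Y h z j := by
  obtain ⟨χ, r, hr, -, h1, h2, -, h4⟩ := cutoff_smooth T.hN (T.omt_smooth j) hq
  refine ⟨fun x => χ x • omt Y h z j x, ⟨h4.contDiffOn, ?_⟩, ?_⟩
  · intro X hX x hx
    by_cases hxN : x ∈ N
    · simp [T.killT j k hjk X hX x hxN]
    · simp [h2 x hxN]
  · filter_upwards [Metric.ball_mem_nhds q hr] with x hx
    simp [h1 x hx]

lemma mem_assoc (T : Tw U N Δ Y h z) {q : Fin n → ℝ} (hq : q ∈ N) {i k : ℕ} (hik : k + i + 3 = n)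
    {v : Fin n → ℝ} (hv : ∀ m, m ≤ i + 1 → fderiv ℝ (zt Y h z m) q v = 0)
    (hh : fderiv ℝ h q v = 0) :
    v ∈ assocOf (annihilatorOn U (derivedFlag U Δ k)) q := by
  have hkk : n - 2 - (i + 1) = k := by omega
  have hvG : v ∈ evalSp (derivedFlag U Δ k) q := by
    have := T.capC hq (v := v) (i + 1) (by omega) (fun m hm => by
      rw [omt_apply, hv m (by omega), hh]; ring)
    rwa [hkk] at this
  rintro ρ ⟨hρs, hρk⟩
  have hk0 : ∀ {u}, u ∈ evalSp (derivedFlag U Δ k) q → ρ q u = 0 := fun hu =>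
    evalSp_le_ker (fun X hX => hρk X hX q (T.hNU hq)) hu
  refine ⟨hk0 hvG, ?_⟩
  have hker : ⨅ j : Fin (i + 1), LinearMap.ker (omt Y h z j q : (Fin n → ℝ) →ₗ[ℝ] ℝ) ≤
      LinearMap.ker (intExtDer ρ q v : (Fin n → ℝ) →ₗ[ℝ] ℝ) := by
    intro w hw
    have hw' : ∀ j < i + 1, omt Y h z j q w = 0 := fun j hj =>
      (Submodule.mem_iInf _).1 hw ⟨j, hj⟩
    have hwG := T.capC hq (v := w) (i + 1) (by omega) hw'
    rw [hkk] at hwG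
    obtain ⟨u, hu, hu'⟩ := brak T.hU T.hΔ T.h0 (T.hNU hq) hvG hwG
    have huk : u ∈ evalSp (derivedFlag U Δ k) q := by
      rw [← hkk]
      refine T.capC hq (i + 1) (by omega) fun j hj => ?_
      have h1 := hu' (omt Y h z j) (T.diffAt (T.omt_smooth j) hq)
        (fun X hX => Filter.mem_of_superset (T.hN.mem_nhds hq) (T.killT j k (by omega) X hX))
      rw [T.omt_ext j hq, hv (j + 1) (by omega), hh] at h1
      linarith
    change intExtDer ρ q v w = 0
    rw [hu' ρ ((hρs.contDiffAt (T.hU.mem_nhds (T.hNU hq))).differentiableAt (by simp))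
      (fun X hX => Filter.mem_of_superset (T.hU.mem_nhds (T.hNU hq)) (hρk X hX)), hk0 huk, neg_zero]
  have hsp := mem_span_of_iInf_ker_le_ker hker
  have h2 := Submodule.mem_map_of_mem
    (f := (LinearMap.toContinuousLinearMap (𝕜 := ℝ) (E := Fin n → ℝ) (F' := ℝ)).toLinearMap) hsp
  rw [Submodule.map_span] at h2
  refine Submodule.span_mono ?_ h2
  rintro _ ⟨_, ⟨j, rfl⟩, rfl⟩
  obtain ⟨ρ', hρ', he⟩ := T.omt_extend hq (j := j) (k := k) (by omega)
  refine ⟨ρ', hρ', ?_⟩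
  rw [he.eq_of_nhds]
  ext w; rfl

lemma cond_two (T : Tw U N Δ Y h z) {f : VF n} (hf : ContDiffOn ℝ ∞ f U)
    {q : Fin n → ℝ} (hq : q ∈ N) {i k : ℕ} (hik : k + i + 3 = n)
    (hc : ∀ ρ ∈ annihilatorOn U (derivedFlag U Δ k),
      lieDerOneForm f ρ q ∈ retractOf (annihilatorOn U (derivedFlag U Δ k)) q)
    {v : Fin n → ℝ} (hv : ∀ m, m ≤ i + 1 → fderiv ℝ (zt Y h z m) q v = 0)
    (hh : fderiv ℝ h q v = 0) :
    fderiv ℝ (fun x => omt Y h z i x (f x)) q v = 0 := by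
  obtain ⟨ρ, hρ, he⟩ := T.omt_extend hq (j := i) (k := k) (by omega)
  have h1 := hc ρ hρ v (T.mem_assoc hq hik hv hh)
  have hfd := (T.diffAt (hf.mono T.hNU) hq).hasFDerivAt
  have h2 := ((T.diffAt (T.omt_smooth i) hq).hasFDerivAt.clm_apply hfd)
  rw [h2.fderiv]
  rw [lieDerOneForm, he.fderiv_eq, he.eq_of_nhds] at h1
  have h3 := T.omt_ext i hq (f q) v
  rw [hv (i + 1) le_rfl, hh, intExtDer_apply] at h3
  simp at h1 ⊢
  linarith

end Tw

end

section
open scoped ContDiff Topology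

noncomputable def phiMap {n : ℕ} (Y : VF n) (h z : (Fin n → ℝ) → ℝ) : VF n :=
  fun x j => if j.1 + 2 ≤ n then zt Y h z j.1 x else h x

noncomputable def frz {n : ℕ} (c : Fin n → ℝ) (i : ℕ) (y : Fin n → ℝ) : Fin n → ℝ :=
  fun j => if j.1 ≤ i + 1 ∨ j.1 + 1 = n then y j else c j

lemma frz_ball {n : ℕ} {c : Fin n → ℝ} {i : ℕ} {r : ℝ} {y : Fin n → ℝ} (hy : y ∈ Metric.ball c r) :
    frz c i y ∈ Metric.ball c r := by
  have hr : 0 < r := lt_of_le_of_lt dist_nonneg hy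
  rw [Metric.mem_ball, dist_pi_lt_iff hr] at hy ⊢
  intro j
  unfold frz
  split_ifs
  · exact hy j
  · simpa using hr

lemma frz_smooth {n : ℕ} (c : Fin n → ℝ) (i : ℕ) : ContDiff ℝ ∞ (frz c i) := by
  refine contDiff_pi.2 fun j => ?_
  unfold frz
  split_ifs
  · exact contDiff_apply ℝ ℝ j
  · exact contDiff_const

namespace Tw

variable {n : ℕ} {U N : Set (Fin n → ℝ)} {Δ : Set (VF n)} {Y : VF n} {h z : (Fin n → ℝ) → ℝ}

lemma phi_smooth (T : Tw U N Δ Y h z) : ContDiffOn ℝ ∞ (phiMap Y h z) N := by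
  refine contDiffOn_pi.2 fun j => ?_
  unfold phiMap
  split_ifs
  · exact T.zt_smooth _
  · exact T.hB.1

lemma dphi (T : Tw U N Δ Y h z) {q : Fin n → ℝ} (hq : q ∈ N) (v : Fin n → ℝ) (j : Fin n) :
    fderiv ℝ (phiMap Y h z) q v j =
      if j.1 + 2 ≤ n then fderiv ℝ (zt Y h z j.1) q v else fderiv ℝ h q v := by
  have h1 := (hasFDerivAt_pi'.1 (T.diffAt T.phi_smooth hq).hasFDerivAt j).fderiv
  have h2 : fderiv ℝ (phiMap Y h z) q v j =
    ((ContinuousLinearMap.proj j).comp (fderiv ℝ (phiMap Y h z) q)) v := rfl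
  rw [h2, ← h1]
  unfold phiMap
  split_ifs <;> rfl

lemma dphi_z (T : Tw U N Δ Y h z) {q : Fin n → ℝ} (hq : q ∈ N) (v : Fin n → ℝ) {m : ℕ}
    (hm : m + 2 ≤ n) :
    fderiv ℝ (zt Y h z m) q v = fderiv ℝ (phiMap Y h z) q v ⟨m, by omega⟩ := by
  rw [T.dphi hq, if_pos hm]

lemma dphi_h (T : Tw U N Δ Y h z) {q : Fin n → ℝ} (hq : q ∈ N) (v : Fin n → ℝ) :
    fderiv ℝ h q v = fderiv ℝ (phiMap Y h z) q v ⟨n - 1, by have := T.hn; omega⟩ := by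
  have := T.hn
  rw [T.dphi hq, if_neg (by simp; omega)]

lemma chart (T : Tw U N Δ Y h z) {p : Fin n → ℝ} (hp : p ∈ N) :
    ∃ V ⊆ N, IsOpen V ∧ p ∈ V ∧ ∃ r > 0, ∃ ψ : VF n,
      phiMap Y h z '' V = Metric.ball (phiMap Y h z p) r ∧
      ContDiffOn ℝ ∞ ψ (Metric.ball (phiMap Y h z p) r) ∧
      (∀ x ∈ V, ψ (phiMap Y h z x) = x) ∧
      ∀ y ∈ Metric.ball (phiMap Y h z p) r, ψ y ∈ V ∧ phiMap Y h z (ψ y) = y := by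
  have hinj : Function.Injective (fderiv ℝ (phiMap Y h z) p : (Fin n → ℝ) →ₗ[ℝ] (Fin n → ℝ)) := by
    rw [injective_iff_map_eq_zero]
    intro v hv
    have hv' : fderiv ℝ (phiMap Y h z) p v = 0 := hv
    refine T.indep hp (fun m hm => ?_) ?_
    · rw [T.dphi_z hp v hm, hv']; rfl
    · rw [T.dphi_h hp v, hv']; rfl
  let L := (LinearEquiv.ofInjectiveEndo _ hinj).toContinuousLinearEquiv
  have hL : (L : (Fin n → ℝ) →L[ℝ] (Fin n → ℝ)) = fderiv ℝ (phiMap Y h z) p := by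
    ext v; rfl
  obtain ⟨e, hpe, heN, he, hes⟩ := smooth_ift T.hN T.phi_smooth hp L (by
    rw [hL]; exact (T.diffAt T.phi_smooth hp).hasFDerivAt)
  have he' : ∀ y, phiMap Y h z y = e y := fun y => (he y).symm
  have hpt : phiMap Y h z p ∈ e.target := by rw [he']; exact e.map_source hpe
  obtain ⟨r, hr, hrt⟩ := Metric.isOpen_iff.1 e.open_target _ hpt
  have hsy : ∀ y ∈ Metric.ball (phiMap Y h z p) r,
      e.symm y ∈ e.source ∩ e ⁻¹' Metric.ball (phiMap Y h z p) r ∧ phiMap Y h z (e.symm y) = y := by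
    intro y hy
    have h1 : e (e.symm y) = y := e.right_inv (hrt hy)
    refine ⟨⟨e.map_target (hrt hy), ?_⟩, by rw [he', h1]⟩
    rw [Set.mem_preimage, h1]; exact hy
  refine ⟨e.source ∩ e ⁻¹' Metric.ball (phiMap Y h z p) r, fun x hx => heN hx.1,
    e.isOpen_inter_preimage Metric.isOpen_ball, ⟨hpe, ?_⟩, r, hr, e.symm, ?_, hes.mono hrt, ?_, hsy⟩
  · rw [Set.mem_preimage, ← he']; exact Metric.mem_ball_self hr
  · ext y
    constructor
    · rintro ⟨x, hx, rfl⟩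
      rw [he' x]; exact hx.2
    · intro hy
      exact ⟨e.symm y, (hsy y hy).1, (hsy y hy).2⟩
  · intro x hx
    rw [he']; exact e.left_inv hx.1

/-- constancy along frozen directions -/
lemma freeze (T : Tw U N Δ Y h z) {f : VF n} (hf : ContDiffOn ℝ ∞ f U)
    (hc : ∀ k : ℕ, 1 ≤ k → k + 3 ≤ n → ∀ q ∈ N, ∀ ρ ∈ annihilatorOn U (derivedFlag U Δ k),
      lieDerOneForm f ρ q ∈ retractOf (annihilatorOn U (derivedFlag U Δ k)) q)
    {c : Fin n → ℝ} {r : ℝ} {ψ : VF n} (hψs : ContDiffOn ℝ ∞ ψ (Metric.ball c r))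
    (hψ : ∀ y ∈ Metric.ball c r, ψ y ∈ N ∧ phiMap Y h z (ψ y) = y) {i : ℕ} (hi : i + 3 ≤ n)
    {y : Fin n → ℝ} (hy : y ∈ Metric.ball c r) :
    omt Y h z i (ψ (frz c i y)) (f (ψ (frz c i y))) = omt Y h z i (ψ y) (f (ψ y)) := by
  rcases Nat.lt_or_ge (i + 3) n with h4 | h4
  swap
  · have : frz c i y = y := by
      ext j
      have := j.2
      unfold frz
      rw [if_pos (by omega)]
    rw [this]
  have hFs : ContDiffOn ℝ ∞ (fun x => omt Y h z i x (f x)) N :=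
    (T.omt_smooth i).clm_apply (hf.mono T.hNU)
  set d := y - frz c i y with hd
  have hdz : ∀ j : Fin n, (j.1 ≤ i + 1 ∨ j.1 + 1 = n) → d j = 0 := by
    intro j hj
    simp [hd, frz, hj]
  have key : ∀ y' ∈ Metric.ball c r, ∃ L : (Fin n → ℝ) →L[ℝ] ℝ,
      HasFDerivAt (fun y => omt Y h z i (ψ y) (f (ψ y))) L y' ∧ L d = 0 := by
    intro y' hy'
    have hψd := ((hψs.contDiffAt (Metric.isOpen_ball.mem_nhds hy')).differentiableAt (by simp)).hasFDerivAt
    have hq := (hψ y' hy').1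
    have hF := (T.diffAt hFs hq).hasFDerivAt
    have hP := (T.diffAt T.phi_smooth hq).hasFDerivAt
    refine ⟨_, hF.comp y' hψd, ?_⟩
    have hid : HasFDerivAt (phiMap Y h z ∘ ψ) (ContinuousLinearMap.id ℝ (Fin n → ℝ)) y' := by
      refine (hasFDerivAt_id y').congr_of_eventuallyEq ?_
      filter_upwards [Metric.isOpen_ball.mem_nhds hy'] with x hx
      exact (hψ x hx).2
    have hu := (hP.comp y' hψd).unique hid
    have hud : fderiv ℝ (phiMap Y h z) (ψ y') (fderiv ℝ ψ y' d) = d :=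
      DFunLike.congr_fun hu d
    change fderiv ℝ (fun x => omt Y h z i x (f x)) (ψ y') (fderiv ℝ ψ y' d) = 0
    refine T.cond_two hf hq (k := n - 3 - i) (by omega)
      (hc (n - 3 - i) (by omega) (by omega) _ hq) (fun m hm => ?_) ?_
    · rw [T.dphi_z hq _ (by omega), hud]
      exact hdz _ (Or.inl hm)
    · rw [T.dphi_h hq, hud]
      exact hdz _ (Or.inr (by simp; omega))
  have hline : ∀ t ∈ Set.Icc (0:ℝ) 1, frz c i y + t • d ∈ Metric.ball c r := by
    intro t ht
    exact (convex_ball c r).add_smul_sub_mem (frz_ball hy) hy ht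
  have hder : ∀ t ∈ Set.Icc (0:ℝ) 1,
      HasDerivAt (fun t : ℝ => omt Y h z i (ψ (frz c i y + t • d)) (f (ψ (frz c i y + t • d)))) 0 t := by
    intro t ht
    obtain ⟨L, hL, hL0⟩ := key _ (hline t ht)
    have h1 : HasDerivAt (fun t : ℝ => frz c i y + t • d) d t := by
      simpa using ((hasDerivAt_id t).smul_const d).const_add (frz c i y)
    have h2 := hL.comp_hasDerivAt t h1
    rw [hL0] at h2
    exact h2
  have h5 := constant_of_has_deriv_right_zero
    (fun t ht => (hder t ht).continuousAt.continuousWithinAt)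
    (fun t ht => (hder t ⟨ht.1, ht.2.le⟩).hasDerivWithinAt) 1 ⟨zero_le_one, le_rfl⟩
  simp only [one_smul, zero_smul, add_zero] at h5
  rw [← h5]
  congr 3 <;> simp [hd]

end Tw

end

section
open scoped ContDiff Topology

lemma evalSp_pair {n : ℕ} {U : Set (Fin n → ℝ)} {g1 g2 : VF n} {q : Fin n → ℝ} (hq : q ∈ U) :
    evalSp (spanOn U {g1, g2}) q = Submodule.span ℝ {g1 q, g2 q} := by
  apply le_antisymm
  · refine Submodule.span_le.2 ?_
    rintro w ⟨X, ⟨m, c, Z, -, hZ, hX⟩, rfl⟩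
    rw [hX q hq]
    refine Submodule.sum_mem _ fun i _ => Submodule.smul_mem _ _ (Submodule.subset_span ?_)
    rcases hZ i with h | h
    · left; rw [h]
    · right; rw [Set.mem_singleton_iff.1 h]; rfl
  · refine Submodule.span_le.2 ?_
    rintro w (rfl | rfl)
    · exact mem_evalSp (spanOn_subset U _ (Or.inl rfl)) q
    · exact mem_evalSp (spanOn_subset U _ (Or.inr rfl)) q

lemma pair_indep {n : ℕ} {U : Set (Fin n → ℝ)} {g1 g2 : VF n} {q : Fin n → ℝ} (hq : q ∈ U)
    (hd : Module.finrank ℝ (evalSp (spanOn U {g1, g2}) q) = 2) :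
    ∀ s t : ℝ, s • g1 q + t • g2 q = 0 → s = 0 ∧ t = 0 := by
  rw [evalSp_pair hq] at hd
  rw [← LinearIndependent.pair_iff, linearIndependent_iff_card_eq_finrank_span]
  rw [Matrix.range_cons, Matrix.range_cons, Matrix.range_empty, Set.union_empty,
    Set.singleton_union, Set.finrank, hd]
  simp

namespace Tw

variable {n : ℕ} {U N : Set (Fin n → ℝ)} {Y : VF n} {h z : (Fin n → ℝ) → ℝ} {g1 g2 : VF n}

lemma det_ne (T : Tw U N (spanOn U {g1, g2}) Y h z) {q : Fin n → ℝ} (hq : q ∈ N) :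
    fderiv ℝ h q (g1 q) * fderiv ℝ (zt Y h z (n - 2)) q (g2 q) -
      fderiv ℝ h q (g2 q) * fderiv ℝ (zt Y h z (n - 2)) q (g1 q) ≠ 0 := by
  intro hdet
  have hli := pair_indep (T.hNU hq) (T.hG 0 T.hn q hq)
  have m1 : g1 q ∈ evalSp (derivedFlag U (spanOn U {g1, g2}) 0) q :=
    mem_evalSp (spanOn_subset U _ (Or.inl rfl)) q
  have m2 : g2 q ∈ evalSp (derivedFlag U (spanOn U {g1, g2}) 0) q :=
    mem_evalSp (spanOn_subset U _ (Or.inr rfl)) q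
  set D := fderiv ℝ (zt Y h z (n - 2)) q with hD
  set E := fderiv ℝ h q with hE
  have h1 : D (g2 q) • g1 q + (-D (g1 q)) • g2 q = 0 := by
    refine T.indep_two hq (Submodule.add_mem _ (Submodule.smul_mem _ _ m1)
      (Submodule.smul_mem _ _ m2)) ?_ ?_
    · rw [← hD]; simp; ring
    · rw [← hE]; simp; linarith
  have h2 : (-E (g2 q)) • g1 q + E (g1 q) • g2 q = 0 := by
    refine T.indep_two hq (Submodule.add_mem _ (Submodule.smul_mem _ _ m1)
      (Submodule.smul_mem _ _ m2)) ?_ ?_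
    · rw [← hD]; simp; linarith
    · rw [← hE]; simp; ring
  obtain ⟨-, a2⟩ := hli _ _ h1
  obtain ⟨-, b2⟩ := hli _ _ h2
  have h3 := T.indep_two hq m1 (by rw [← hD]; linarith) b2
  have := hli 1 0 (by rw [h3]; simp)
  exact one_ne_zero this.1

lemma assemble (T : Tw U N (spanOn U {g1, g2}) Y h z) {f : VF n} (hf : ContDiffOn ℝ ∞ f U)
    (hg1 : ContDiffOn ℝ ∞ g1 U) (hg2 : ContDiffOn ℝ ∞ g2 U)
    (hc : ∀ k : ℕ, 1 ≤ k → k + 3 ≤ n → ∀ q ∈ N,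
      ∀ ρ ∈ annihilatorOn U (derivedFlag U (spanOn U {g1, g2}) k),
      lieDerOneForm f ρ q ∈ retractOf (annihilatorOn U (derivedFlag U (spanOn U {g1, g2}) k)) q)
    {p : Fin n → ℝ} (hp : p ∈ N) : IsTriangularizableAt n U f g1 g2 p := by
  obtain ⟨V, hVN, hVo, hpV, r, hr, ψ, him, hψs, hψφ, hψ⟩ := T.chart hp
  have hn := T.hn
  have hVU := hVN.trans T.hNU
  have cE : ∀ {X : VF n}, ContDiffOn ℝ ∞ X U → ContDiffOn ℝ ∞ (fun x => fderiv ℝ h x (X x)) V :=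
    fun hX => (T.hdh.mono hVN).clm_apply (hX.mono hVU)
  have cD : ∀ {X : VF n}, ContDiffOn ℝ ∞ X U →
      ContDiffOn ℝ ∞ (fun x => fderiv ℝ (zt Y h z (n - 2)) x (X x)) V :=
    fun hX => ((T.dzt (n - 2)).mono hVN).clm_apply (hX.mono hVU)
  set dt : (Fin n → ℝ) → ℝ := fun q =>
    fderiv ℝ h q (g1 q) * fderiv ℝ (zt Y h z (n - 2)) q (g2 q) -
      fderiv ℝ h q (g2 q) * fderiv ℝ (zt Y h z (n - 2)) q (g1 q) with hdt
  have hdt0 : ∀ q ∈ V, dt q ≠ 0 := fun q hq => T.det_ne (hVN hq)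
  have hdts : ContDiffOn ℝ ∞ dt V := ((cE hg1).mul (cD hg2)).sub ((cE hg2).mul (cD hg1))
  refine ⟨V, hVo, hpV, hVU, phiMap Y h z, ψ, T.phi_smooth.mono hVN, by rw [him]; exact Metric.isOpen_ball,
    by rw [him]; exact hψs, hψφ,
    fun x => ![-(fderiv ℝ (zt Y h z (n - 2)) x (g2 x) * fderiv ℝ h x (f x) -
        fderiv ℝ h x (g2 x) * fderiv ℝ (zt Y h z (n - 2)) x (f x)) / dt x,
      -(fderiv ℝ h x (g1 x) * fderiv ℝ (zt Y h z (n - 2)) x (f x) -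
        fderiv ℝ (zt Y h z (n - 2)) x (g1 x) * fderiv ℝ h x (f x)) / dt x],
    fun x => ![![fderiv ℝ (zt Y h z (n - 2)) x (g2 x) / dt x, -fderiv ℝ h x (g2 x) / dt x],
      ![-fderiv ℝ (zt Y h z (n - 2)) x (g1 x) / dt x, fderiv ℝ h x (g1 x) / dt x]],
    ?_, ?_, ?_,
    fun i y => omt Y h z i (ψ (frz (phiMap Y h z p) i y)) (f (ψ (frz (phiMap Y h z p) i y))),
    ?_, ?_, ?_⟩
  · intro i
    fin_cases i
    · exact ((((cD hg2).mul (cE hf)).sub ((cE hg2).mul (cD hf))).neg).div hdts hdt0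
    · exact ((((cE hg1).mul (cD hf)).sub ((cD hg1).mul (cE hf))).neg).div hdts hdt0
  · intro i j
    fin_cases i <;> fin_cases j
    · exact (cD hg2).div hdts hdt0
    · exact (cE hg2).neg.div hdts hdt0
    · exact (cD hg1).neg.div hdts hdt0
    · exact (cE hg1).div hdts hdt0
  · intro x hx
    have h0 := hdt0 x hx
    have : fderiv ℝ (zt Y h z (n - 2)) x (g2 x) / dt x * (fderiv ℝ h x (g1 x) / dt x) -
        -fderiv ℝ h x (g2 x) / dt x * (-fderiv ℝ (zt Y h z (n - 2)) x (g1 x) / dt x) = 1 / dt x := by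
      field_simp
      rw [hdt]; ring
    simp only [Matrix.cons_val_zero, Matrix.cons_val_one]
    rw [this]
    exact one_div_ne_zero h0
  · intro i hi
    rw [him]
    have hFs : ContDiffOn ℝ ∞ (fun x => omt Y h z i x (f x)) N :=
      (T.omt_smooth i).clm_apply (hf.mono T.hNU)
    exact (hFs.comp hψs fun y hy => hVN (hψ y hy).1).comp (frz_smooth _ _).contDiffOn
      fun y hy => frz_ball hy
  · intro i hi y y' hyy
    have : frz (phiMap Y h z p) i y = frz (phiMap Y h z p) i y' := by
      ext j
      unfold frz
      split_ifs with hj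
      · exact hyy j hj
      · rfl
    simp only [this]
  · intro x hx v
    have h0 := hdt0 x hx
    have hxN := hVN hx
    simp only [Matrix.cons_val_zero, Matrix.cons_val_one]
    set a : ℝ := -(fderiv ℝ (zt Y h z (n - 2)) x (g2 x) * fderiv ℝ h x (f x) -
        fderiv ℝ h x (g2 x) * fderiv ℝ (zt Y h z (n - 2)) x (f x)) / dt x +
        fderiv ℝ (zt Y h z (n - 2)) x (g2 x) / dt x * v 0 + -fderiv ℝ h x (g2 x) / dt x * v 1 with ha
    set b : ℝ := -(fderiv ℝ h x (g1 x) * fderiv ℝ (zt Y h z (n - 2)) x (f x) -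
        fderiv ℝ (zt Y h z (n - 2)) x (g1 x) * fderiv ℝ h x (f x)) / dt x +
        -fderiv ℝ (zt Y h z (n - 2)) x (g1 x) / dt x * v 0 + fderiv ℝ h x (g1 x) / dt x * v 1 with hb
    have e1 : fderiv ℝ h x (f x + a • g1 x + b • g2 x) = v 0 := by
      simp only [map_add, map_smul, smul_eq_mul, ha, hb]
      field_simp
      simp only [hdt]; ring
    have e2 : fderiv ℝ (zt Y h z (n - 2)) x (f x + a • g1 x + b • g2 x) = v 1 := by
      simp only [map_add, map_smul, smul_eq_mul, ha, hb]
      field_simp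
      simp only [hdt]; ring
    ext j
    rw [T.dphi hxN]
    unfold triRHS
    have hj := j.2
    rcases Nat.lt_or_ge (j.1 + 2) n with hj3 | hj3
    · rw [if_pos hj3.le, dif_pos (by omega)]
      have hxb : phiMap Y h z x ∈ Metric.ball (phiMap Y h z p) r := by
        rw [← him]; exact ⟨x, hx, rfl⟩
      have h5 := T.freeze hf hc hψs (fun y hy => ⟨hVN (hψ y hy).1, (hψ y hy).2⟩)
        (i := j.1) (by omega) hxb
      simp only
      rw [h5, hψφ x hx]
      have k1 := T.killT j.1 0 (by omega) g1 (spanOn_subset U _ (Or.inl rfl)) x hxN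
      have k2 := T.killT j.1 0 (by omega) g2 (spanOn_subset U _ (Or.inr rfl)) x hxN
      have h6 : omt Y h z j.1 x (f x + a • g1 x + b • g2 x) = omt Y h z j.1 x (f x) := by
        simp [k1, k2]
      have h7 : phiMap Y h z x ⟨j.1 + 1, by omega⟩ = zt Y h z (j.1 + 1) x := by
        unfold phiMap
        rw [if_pos (by simp; omega)]
      rw [h7, ← h6, omt_apply, e1]
      ring
    · rw [dif_neg (by omega)]
      rcases Nat.lt_or_ge n (j.1 + 2) with hj4 | hj4
      · rw [if_neg (by omega), if_neg (by omega), e1]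
      · rw [if_pos hj4, if_pos (by omega), show j.1 = n - 2 by omega, e2]

end Tw

theorem main_aux {n : ℕ} (hn : 2 ≤ n) (U : Set (Fin n → ℝ)) (hU : IsOpen U)
    (f g1 g2 : VF n)
    (hf : ContDiffOn ℝ (⊤ : ℕ∞) f U) (hg1 : ContDiffOn ℝ (⊤ : ℕ∞) g1 U) (hg2 : ContDiffOn ℝ (⊤ : ℕ∞) g2 U)
    (p : Fin n → ℝ)
    (hcond : ∃ W : Set (Fin n → ℝ), IsOpen W ∧ p ∈ W ∧ W ⊆ U ∧
      MainConditionsOn n U W f g1 g2) :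
    IsTriangularizableAt n U f g1 g2 p := by
  obtain ⟨W, hW, hpW, hWU, hc1, hc2⟩ := hcond
  have hΔ : ∀ X ∈ spanOn U {g1, g2}, ContDiffOn ℝ ∞ X U := spanOn_smooth (by
    rintro X (rfl | rfl)
    · exact hg1
    · exact hg2)
  have h0 := spanOn_zero_mem U {g1, g2}
  have hG : DimG U W (spanOn U {g1, g2}) := fun k hk q hq => (hc1 k hk q hq).2
  have hbase : ∃ N ⊆ W, IsOpen N ∧ p ∈ N ∧ ∃ Y ∈ spanOn U {g1, g2}, ∃ h z,
      Base U N (spanOn U {g1, g2}) Y h z := by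
    rcases Nat.lt_or_ge n 3 with h3 | h3
    · exact base_two (by omega) hU hW hWU hΔ hG hpW
    · refine base_three h3 hU hW hWU hΔ h0 hG hpW ?_
      have := (hc1 (n - 2) (by omega) p hpW).1
      rw [show 2 + (n - 2) = n by omega] at this
      exact this
  obtain ⟨N, hNW, hN, hpN, Y, hY, h, z, hB⟩ := hbase
  have T : Tw U N (spanOn U {g1, g2}) Y h z :=
    ⟨hn, hU, hN, hNW.trans hWU, hΔ, h0, fun k hk q hq => hG k hk q (hNW hq), hY, hB⟩
  exact T.assemble hf hg1 hg2 (fun k h1 h2 q hq => hc2 k h1 h2 q (hNW hq)) hpN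

end

noncomputable section

/-- **sufficiency in the main theorem.** If conditions 1) and 2) hold on
some open neighborhood `W ⊆ U` of `p`, then the system `ẋ = f(x) + g₁(x)u₁ + g₂(x)u₂`
is transformable into the triangular form (3) near `p`: there are a local change of
coordinates `z = φ(x)` and a regular static state feedback `u = α(x) + β(x)v` bringing
the closed-loop system to the triangular form. -/
theorem main_theorem_sufficiency {n : ℕ} (hn : 2 ≤ n) (U : Set (Fin n → ℝ)) (hU : IsOpen U)
    (f g1 g2 : VF n)
    (hf : ContDiffOn ℝ (⊤ : ℕ∞) f U) (hg1 : ContDiffOn ℝ (⊤ : ℕ∞) g1 U) (hg2 : ContDiffOn ℝ (⊤ : ℕ∞) g2 U)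
    (p : Fin n → ℝ) (hp : p ∈ U)
    (hcond : ∃ W : Set (Fin n → ℝ), IsOpen W ∧ p ∈ W ∧ W ⊆ U ∧
      MainConditionsOn n U W f g1 g2) :
    IsTriangularizableAt n U f g1 g2 p := by
  exact main_aux hn U hU f g1 g2 hf hg1 hg2 p hcond

end
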